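/- Let (A, m, k) be a commutative Noetherian local ring and let C be a totally acyclic minimal complex of finitely generated free A-modules, with M = Im(d₀ : C₀ → C₋₁) and M* = Hom_A(M, A). Suppose there exists a quasi-deformation A → A' ← B such that the B-module (M ⊗_A A') ⊕ (M* ⊗_A A'), regarded as a B-module by restriction of scalars along the surjection B → A', has finite projective dimension over B. Then C has symmetric growth, i.e. cx⁺(C) = cx⁻(C). -/

import Mathlib

/-!
STATEMENT 6: Let (A, m, k) be a commutative Noetherian local ring and C a totally
acyclic minimal complex of finitely generated free A-modules, with M = Im(d₀) and
M* = Hom_A(M, A).  Suppose there exists a quasi-deformation A → A' ← B such that the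
B-module (M ⊗_A A') ⊕ (M* ⊗_A A') has finite projective dimension over B.  Then C
has symmetric growth, i.e. cx⁺(C) = cx⁻(C).
-/

universe u

open IsLocalRing Filter TensorProduct

/-- A totally acyclic complex of finitely generated free `A`-modules.
Here `d n : C (n+1) → C n`, so the paper's `d₀ : C₀ → C₋₁` is `d (-1)`. -/
structure TotallyAcyclicComplex (A : Type u) [CommRing A] : Type (u + 1) where
  C : ℤ → Type u
  [acg : ∀ n, AddCommGroup (C n)]
  [mod : ∀ n, Module A (C n)]
  free : ∀ n, Module.Free A (C n)
  fin : ∀ n, Module.Finite A (C n)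
  d : ∀ n : ℤ, C (n + 1) →ₗ[A] C n
  exact : ∀ n : ℤ, LinearMap.range (d (n + 1)) = LinearMap.ker (d n)
  dualExact : ∀ n : ℤ,
    LinearMap.range ((d n).dualMap) = LinearMap.ker ((d (n + 1)).dualMap)

attribute [instance] TotallyAcyclicComplex.acg TotallyAcyclicComplex.mod

/-- The polynomial rate of growth of a sequence of Betti numbers `β` in the positive
direction: the infimum (in `ℕ∞`, so `⊤` if no such `t` exists) of all `t ∈ ℕ` such
that `β n ≤ a · n^(t−1)` for some real `a` and all sufficiently large `n`. -/
noncomputable def complexityPlus (β : ℤ → ℕ) : ℕ∞ :=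
  sInf {t : ℕ∞ | ∃ s : ℕ, t = (s : ℕ∞) ∧ ∃ a : ℝ,
    ∀ᶠ n : ℕ in atTop, (β (n : ℤ) : ℝ) ≤ a * (n : ℝ) ^ ((s : ℤ) - 1)}

/-- The polynomial rate of growth of `β` in the negative direction. -/
noncomputable def complexityMinus (β : ℤ → ℕ) : ℕ∞ :=
  complexityPlus fun n => β (-n)

/-- A finite free resolution `0 → F_ℓ → ⋯ → F₁ → F₀ → M → 0` of `M` by finitely
generated free `B`-modules; its existence expresses that `M` has finite projective
dimension over `B`. -/
structure FiniteFreeResolution (B : Type u) [CommRing B]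
    (M : Type u) [AddCommGroup M] [Module B M] : Type (u + 1) where
  len : ℕ
  F : ℕ → Type u
  [acg : ∀ n, AddCommGroup (F n)]
  [mod : ∀ n, Module B (F n)]
  free : ∀ n, Module.Free B (F n)
  fin : ∀ n, Module.Finite B (F n)
  d : ∀ n : ℕ, F (n + 1) →ₗ[B] F n
  aug : F 0 →ₗ[B] M
  augSurj : Function.Surjective aug
  ex0 : LinearMap.range (d 0) = LinearMap.ker aug
  ex : ∀ n : ℕ, LinearMap.range (d (n + 1)) = LinearMap.ker (d n)
  bounded : ∀ n : ℕ, len ≤ n → Subsingleton (F n)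

/-!
Let `x` be the regular sequence generating the kernel of `B → A'`. Reindexed so that differentials
raise degrees, `C ⊗ A'` lifts to a graded free `B`-module `F` with an endomorphism `d` of degree `1`
such that `d² = ∑ xᵢ χᵢ`. The Eisenbud operators `χᵢ` make the homology `E` of `F ⧸ 𝔪 F` a module
over `B[χ]`, and `dim Eₙ = rank C₋ₙ` by minimality. As `M ⊗ A'` has finite projective dimension over
`B`, the truncations of `E` to the degrees at least `n` are finitely generated over `B[χ]`, so some
homogeneous operator of positive degree is injective on `E` in large degrees. The mapping cone of
this operator has the same finiteness property, and passing to it lowers the growth of `E` by one in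
the positive direction and by at most one in the negative direction. This reduces to the case where
`E` vanishes in large degrees; there `E = 0`. Hence `cx⁺(C) ≤ cx⁻(C)`, and the same argument for
the complex `C*` and the module `M* ⊗ A'` gives the opposite inequality.
-/

namespace SymmetricGrowth

section IdealMultiples

variable {B : Type*} [CommRing B] {M N : Type*} [AddCommGroup M] [Module B M]
  [AddCommGroup N] [Module B N]

lemma map_mem_smul_top {J : Ideal B} (f : M →ₗ[B] N) {v : M} (hv : v ∈ (J • ⊤ : Submodule B M)) :
    f v ∈ (J • ⊤ : Submodule B N) :=
  Submodule.smul_top_le_comap_smul_top J f hv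

lemma mem_smul_top_self {J : Ideal B} {r : B} : r ∈ (J • ⊤ : Submodule B B) ↔ r ∈ J := by
  rw [smul_eq_mul, Ideal.mul_top]

lemma basis_mem_smul_top {ι : Type*} (b : Module.Basis ι B M) {J : Ideal B} {v : M} :
    v ∈ (J • ⊤ : Submodule B M) ↔ ∀ i, b.repr v i ∈ J := by
  refine ⟨fun hv i => mem_smul_top_self.1 (map_mem_smul_top (b.coord i) hv), fun hv => ?_⟩
  rw [← b.linearCombination_repr v, Finsupp.linearCombination_apply]
  exact Submodule.sum_mem _ fun i _ => Submodule.smul_mem_smul (hv i) trivial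

lemma mem_sup_span_singleton_smul_top {J : Ideal B} {r : B} {v : M} :
    v ∈ ((J ⊔ Ideal.span {r}) • ⊤ : Submodule B M) ↔
      ∃ u, v - r • u ∈ (J • ⊤ : Submodule B M) := by
  rw [Submodule.sup_smul, Submodule.mem_sup]
  simp_rw [Submodule.ideal_span_singleton_smul, Submodule.mem_smul_pointwise_iff_exists]
  constructor
  · rintro ⟨w, hw, _, ⟨u, -, rfl⟩, rfl⟩
    exact ⟨u, by rwa [add_sub_cancel_right]⟩
  · rintro ⟨u, hu⟩
    exact ⟨_, hu, _, ⟨u, trivial, rfl⟩, sub_add_cancel _ _⟩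

/-- The ideal `(x 0, …, x (j - 1))` generated by an initial segment of a sequence. -/
def initialIdeal (x : ℕ → B) (j : ℕ) : Ideal B :=
  Ideal.span (x '' Set.Iio j)

variable {x : ℕ → B}

lemma initialIdeal_zero : initialIdeal x 0 = ⊥ := by
  simp [initialIdeal]

lemma initialIdeal_succ (j : ℕ) :
    initialIdeal x (j + 1) = initialIdeal x j ⊔ Ideal.span {x j} := by
  have hIio : Set.Iio (j + 1) = Set.Iio j ∪ {j} := by
    ext i
    simp [le_iff_lt_or_eq]
  rw [initialIdeal, hIio, Set.image_union, Set.image_singleton, Ideal.span_union, initialIdeal]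

lemma initialIdeal_mono : Monotone (initialIdeal x) := fun _ _ h =>
  Ideal.span_mono (Set.image_mono (Set.Iio_subset_Iio h))

lemma mem_initialIdeal {i j : ℕ} (h : i < j) : x i ∈ initialIdeal x j :=
  Ideal.subset_span ⟨i, h, rfl⟩

lemma mem_initialIdeal_smul_top {j : ℕ} {v : M} :
    v ∈ (initialIdeal x j • ⊤ : Submodule B M) ↔
      ∃ a : ℕ → M, v = ∑ i ∈ Finset.range j, x i • a i := by
  constructor
  · induction j generalizing v with
    | zero => simp [initialIdeal_zero]
    | succ j ih =>
      rw [initialIdeal_succ, mem_sup_span_singleton_smul_top]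
      rintro ⟨u, hu⟩
      obtain ⟨a, ha⟩ := ih hu
      refine ⟨Function.update a j u, ?_⟩
      rw [Finset.sum_range_succ, Function.update_self, ← sub_eq_iff_eq_add, ha]
      refine Finset.sum_congr rfl fun i hi => ?_
      rw [Function.update_of_ne (Finset.mem_range.1 hi).ne]
  · rintro ⟨a, rfl⟩
    exact Submodule.sum_mem _ fun i hi =>
      Submodule.smul_mem_smul (mem_initialIdeal (Finset.mem_range.1 hi)) trivial

/-- The element `r` is a nonzerodivisor on `M ⧸ J M`. -/
def IsRegularModulo (J : Ideal B) (r : B) (M : Type*) [AddCommGroup M] [Module B M] : Prop :=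
  ∀ v : M, r • v ∈ (J • ⊤ : Submodule B M) → v ∈ (J • ⊤ : Submodule B M)

lemma IsRegularModulo.of_basis {ι : Type*} (b : Module.Basis ι B M) {J : Ideal B} {r : B}
    (h : IsRegularModulo J r B) : IsRegularModulo J r M := by
  intro v hv
  rw [basis_mem_smul_top b] at hv ⊢
  intro i
  exact mem_smul_top_self.1 (h _ (mem_smul_top_self.2 (by simpa using hv i)))

lemma mem_smul_top_of_sum_smul_eq_zero {j : ℕ}
    (hx : ∀ i < j, IsRegularModulo (initialIdeal x i) (x i) M) {a : ℕ → M}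
    (ha : ∑ i ∈ Finset.range j, x i • a i = 0) :
    ∀ i < j, a i ∈ (initialIdeal x j • ⊤ : Submodule B M) := by
  induction j generalizing a with
  | zero => intro i hi; omega
  | succ j ih =>
    intro i hi
    have mono : (initialIdeal x j • ⊤ : Submodule B M) ≤ initialIdeal x (j + 1) • ⊤ :=
      Submodule.smul_mono_left (initialIdeal_mono j.le_succ)
    rw [Finset.sum_range_succ] at ha
    have hlast : a j ∈ (initialIdeal x j • ⊤ : Submodule B M) := by
      refine hx j j.lt_succ_self _ ?_
      rw [← neg_eq_of_add_eq_zero_right ha, neg_mem_iff, mem_initialIdeal_smul_top]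
      exact ⟨a, rfl⟩
    rcases Nat.lt_succ_iff_lt_or_eq.1 hi with hij | rfl
    · obtain ⟨b, hb⟩ := mem_initialIdeal_smul_top.1 hlast
      have hsum : ∑ k ∈ Finset.range j, x k • (a k + x j • b k) = 0 := by
        rw [← ha, hb]
        simp only [smul_add, Finset.sum_add_distrib, Finset.smul_sum, smul_comm (x j)]
      have hmem := mono (ih (fun k hk => hx k (hk.trans j.lt_succ_self)) hsum i hij)
      rw [← add_sub_cancel_right (a i) (x j • b i)]
      exact sub_mem hmem (Submodule.smul_mem_smul (mem_initialIdeal j.lt_succ_self) trivial)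
    · exact mono hlast

end IdealMultiples

section GradedFree

/-- A `ℤ`-graded free module with finitely many basis elements in each degree, presented by its
total module and a homogeneous basis. Homogeneous components are recovered by projections
(`GradedFree.proj`), so that all maps are endomorphisms of one module. -/
structure GradedFree (B : Type u) [CommRing B] where
  carrier : Type u
  [addCommGroup : AddCommGroup carrier]
  [module : Module B carrier]
  index : Type
  basis : Module.Basis index B carrier
  degree : index → ℤ
  finite_degree : ∀ n, {i | degree i = n}.Finite

variable {B : Type u} [CommRing B]

instance : CoeSort (GradedFree B) (Type u) := ⟨GradedFree.carrier⟩

attribute [instance] GradedFree.addCommGroup GradedFree.module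

namespace GradedFree

variable (G H K : GradedFree B)

open Classical in
/-- The projection of a graded free module onto its component of degree `n`. -/
noncomputable def proj (n : ℤ) : G →ₗ[B] G :=
  G.basis.constr B fun i => if G.degree i = n then G.basis i else 0

open Classical in
lemma proj_basis (n : ℤ) (i : G.index) :
    G.proj n (G.basis i) = if G.degree i = n then G.basis i else 0 := by
  simp [proj, Module.Basis.constr_basis]

lemma proj_degree_basis (i : G.index) : G.proj (G.degree i) (G.basis i) = G.basis i := by
  simp [proj_basis]

lemma proj_proj_self (n : ℤ) (v : G) : G.proj n (G.proj n v) = G.proj n v := by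
  suffices G.proj n ∘ₗ G.proj n = G.proj n from LinearMap.congr_fun this v
  refine G.basis.ext fun i => ?_
  by_cases hi : G.degree i = n <;> simp [proj_basis, hi]

lemma proj_proj_of_ne {m n : ℤ} (h : m ≠ n) (v : G) : G.proj m (G.proj n v) = 0 := by
  suffices G.proj m ∘ₗ G.proj n = 0 from LinearMap.congr_fun this v
  refine G.basis.ext fun i => ?_
  by_cases hi : G.degree i = n
  · simp [proj_basis, hi, h.symm]
  · simp [proj_basis, hi]

lemma exists_eq_sum_proj (v : G) : ∃ s : Finset ℤ, ∀ t, s ⊆ t → v = ∑ n ∈ t, G.proj n v := by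
  classical
  refine ⟨(G.basis.repr v).support.image G.degree, fun t ht => ?_⟩
  have hbasis : ∀ i ∈ (G.basis.repr v).support, G.basis i = ∑ n ∈ t, G.proj n (G.basis i) := by
    intro i hi
    simp only [proj_basis]
    rw [Finset.sum_ite_eq, if_pos (ht (Finset.mem_image_of_mem _ hi))]
  have hv := G.basis.linearCombination_repr v
  rw [Finsupp.linearCombination_apply, Finsupp.sum] at hv
  calc v = ∑ i ∈ (G.basis.repr v).support, ∑ n ∈ t, G.basis.repr v i • G.proj n (G.basis i) := by
        conv_lhs => rw [← hv]
        exact Finset.sum_congr rfl fun i hi => by rw [← Finset.smul_sum, ← hbasis i hi]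
    _ = ∑ n ∈ t, G.proj n v := by
        rw [Finset.sum_comm]
        conv_rhs => rw [← hv]
        simp only [map_sum, map_smul]

lemma mem_of_proj_mem (P : Submodule B G) {v : G} (h : ∀ n, G.proj n v ∈ P) : v ∈ P := by
  obtain ⟨s, hs⟩ := G.exists_eq_sum_proj v
  rw [hs s subset_rfl]
  exact Submodule.sum_mem _ fun n _ => h n

lemma range_proj_eq_span (n : ℤ) :
    LinearMap.range (G.proj n) = Submodule.span B (G.basis '' {i | G.degree i = n}) := by
  apply le_antisymm
  · rw [LinearMap.range_eq_map, ← G.basis.span_eq, Submodule.map_span_le]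
    rintro _ ⟨i, rfl⟩
    by_cases hi : G.degree i = n
    · rw [proj_basis, if_pos hi]
      exact Submodule.subset_span ⟨i, hi, rfl⟩
    · rw [proj_basis, if_neg hi]
      exact zero_mem _
  · rw [Submodule.span_le]
    rintro _ ⟨i, rfl, rfl⟩
    exact ⟨_, G.proj_degree_basis i⟩

instance finite_range_proj (n : ℤ) : Module.Finite B (LinearMap.range (G.proj n)) := by
  rw [range_proj_eq_span]
  exact Module.Finite.iff_fg.2 (Submodule.fg_span ((G.finite_degree n).image _))

variable {G H K}

/-- The linear map `T` is homogeneous of degree `s`. -/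
def IsHomogeneous (s : ℤ) (T : G →ₗ[B] H) : Prop :=
  ∀ n v, T (G.proj n v) = H.proj (n + s) (T v)

namespace IsHomogeneous

lemma of_basis {s : ℤ} {T : G →ₗ[B] H}
    (h : ∀ i, H.proj (G.degree i + s) (T (G.basis i)) = T (G.basis i)) : IsHomogeneous s T := by
  intro n v
  suffices T ∘ₗ G.proj n = H.proj (n + s) ∘ₗ T from LinearMap.congr_fun this v
  refine G.basis.ext fun i => ?_
  simp only [LinearMap.comp_apply, proj_basis]
  split_ifs with hi
  · rw [← hi, h]
  · rw [map_zero, ← h i, proj_proj_of_ne _ (by omega)]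

lemma proj_map_basis {s : ℤ} {T : G →ₗ[B] H} (h : IsHomogeneous s T) (i : G.index) :
    H.proj (G.degree i + s) (T (G.basis i)) = T (G.basis i) := by
  rw [← h, proj_degree_basis]

lemma comp {s t : ℤ} {T : H →ₗ[B] K} {U : G →ₗ[B] H} (hT : IsHomogeneous s T)
    (hU : IsHomogeneous t U) : IsHomogeneous (t + s) (T ∘ₗ U) := by
  intro n v
  rw [LinearMap.comp_apply, hU, hT, add_assoc, LinearMap.comp_apply]

lemma add {s : ℤ} {T U : G →ₗ[B] H} (hT : IsHomogeneous s T) (hU : IsHomogeneous s U) :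
    IsHomogeneous s (T + U) := by
  intro n v; simp [hT n, hU n]

lemma smul {s : ℤ} {T : G →ₗ[B] H} (r : B) (hT : IsHomogeneous s T) :
    IsHomogeneous s (r • T) := by
  intro n v; simp [hT n]

lemma id : IsHomogeneous 0 (LinearMap.id : G →ₗ[B] G) := by
  intro n v; simp

lemma zero (s : ℤ) : IsHomogeneous s (0 : G →ₗ[B] H) := by
  intro n v; simp

lemma exists_coefficients {x : ℕ → B} {j : ℕ} {s : ℤ} {T : G →ₗ[B] H} (h : IsHomogeneous s T)
    (hT : ∀ v, T v ∈ (initialIdeal x j • ⊤ : Submodule B H)) :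
    ∃ g : ℕ → G →ₗ[B] H, (∀ i, IsHomogeneous s (g i)) ∧
      ∀ v, T v = ∑ i ∈ Finset.range j, x i • g i v := by
  choose a ha using fun i => mem_initialIdeal_smul_top.1 (hT (G.basis i))
  let g k := G.basis.constr B fun i => H.proj (G.degree i + s) (a i k)
  refine ⟨g, fun k => of_basis fun i => ?_, fun v => ?_⟩
  · rw [Module.Basis.constr_basis, proj_proj_self]
  · suffices T = ∑ i ∈ Finset.range j, x i • g i by
      simpa using LinearMap.congr_fun this v
    refine G.basis.ext fun i => ?_
    rw [← h.proj_map_basis i, ha]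
    simp [g, Module.Basis.constr_basis]

end IsHomogeneous

lemma exists_linearMap_sub_smul_mem {J : Ideal B} {r : B} {φ : G →ₗ[B] B}
    (h : ∀ v, φ v ∈ J ⊔ Ideal.span {r}) : ∃ u : G →ₗ[B] B, ∀ v, φ v - r * u v ∈ J := by
  choose a ha using fun i => mem_sup_span_singleton_smul_top.1
    (mem_smul_top_self.2 (h (G.basis i)) : φ (G.basis i) ∈ ((J ⊔ Ideal.span {r}) • ⊤ : Ideal B))
  let u := G.basis.constr B a
  have hspan : (⊤ : Submodule B G) ≤ Submodule.comap (φ - r • u) J := by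
    rw [← G.basis.span_eq, Submodule.span_le]
    rintro _ ⟨i, rfl⟩
    simpa [u, Module.Basis.constr_basis] using ha i
  exact ⟨u, fun v => by simpa using hspan (Submodule.mem_top (x := v))⟩

/-- The direct sum `G ⊕ H(r)`: basis elements of `H` have their degree lowered by `r`. -/
noncomputable abbrev prodShift (G H : GradedFree B) (r : ℤ) : GradedFree B where
  carrier := G × H
  index := G.index ⊕ H.index
  basis := G.basis.prod H.basis
  degree := Sum.elim G.degree fun i => H.degree i - r
  finite_degree n := by
    refine (((G.finite_degree n).image Sum.inl).union
      ((H.finite_degree (n + r)).image Sum.inr)).subset ?_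
    rintro (i | i) hi
    · exact Or.inl ⟨i, hi, rfl⟩
    · exact Or.inr ⟨i, sub_eq_iff_eq_add.1 hi, rfl⟩

lemma proj_prodShift (r n : ℤ) (v : G × H) :
    (G.prodShift H r).proj n v = (G.proj n v.1, H.proj (n + r) v.2) := by
  suffices (G.prodShift H r).proj n = (G.proj n).prodMap (H.proj (n + r)) from
    LinearMap.congr_fun this v
  refine (G.basis.prod H.basis).ext fun i => ?_
  refine ((G.prodShift H r).proj_basis n i).trans ?_
  rcases i with i | i
  · by_cases hi : G.degree i = n
    · simp [Module.Basis.prod_apply, proj_basis, hi]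
    · simp only [Sum.elim_inl, if_neg hi, Module.Basis.prod_apply]
      exact Prod.ext (by simp [proj_basis, hi]) (by simp)
  · by_cases hi : H.degree i = n + r
    · simp [Module.Basis.prod_apply, proj_basis, hi]
    · simp only [Sum.elim_inr, sub_eq_iff_eq_add, if_neg hi, Module.Basis.prod_apply]
      exact Prod.ext (by simp) (by simp [proj_basis, hi])

end GradedFree

end GradedFree

section CommutingOperators

open scoped IsMulCommutative in
lemma exists_algHom_of_commute {B A σ : Type*} [CommRing B] [Ring A] [Algebra B A] (f : σ → A)
    (hf : ∀ i k, Commute (f i) (f k)) :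
    ∃ ρ : MvPolynomial σ B →ₐ[B] A, ∀ i, ρ (MvPolynomial.X i) = f i := by
  have := Algebra.isMulCommutative_adjoin B (s := Set.range f) (by
    rintro _ ⟨i, rfl⟩ _ ⟨k, rfl⟩
    exact hf i k)
  let g : MvPolynomial σ B →ₐ[B] Algebra.adjoin B (Set.range f) :=
    MvPolynomial.aeval fun i => ⟨f i, Algebra.subset_adjoin ⟨i, rfl⟩⟩
  exact ⟨(Algebra.adjoin B (Set.range f)).val.comp g, fun i => by simp [g]⟩

end CommutingOperators

section LiftedComplex

/-- A sequence `x 0, …, x (length - 1)` in the maximal ideal of a local ring such that each `x i`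
is a nonzerodivisor modulo the preceding ones. The values of `x` from `length` on are irrelevant. -/
structure LocalRegularSequence (B : Type u) [CommRing B] [IsLocalRing B] where
  length : ℕ
  x : ℕ → B
  mem_maximalIdeal : ∀ i < length, x i ∈ maximalIdeal B
  isRegularModulo : ∀ i < length, IsRegularModulo (initialIdeal x i) (x i) B

variable {B : Type u} [CommRing B] [IsLocalRing B]

namespace LocalRegularSequence

variable (R : LocalRegularSequence B)

/-- The ideal generated by a regular sequence. -/
abbrev ideal : Ideal B := initialIdeal R.x R.length

/-- The polynomial ring in one variable per element of the regular sequence, which acts on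
homology through the Eisenbud operators. -/
abbrev Operators : Type u := MvPolynomial (Fin R.length) B

lemma initialIdeal_le_maximalIdeal {j : ℕ} (hj : j ≤ R.length) :
    initialIdeal R.x j ≤ maximalIdeal B := by
  rw [initialIdeal, Ideal.span_le]
  rintro _ ⟨i, hi, rfl⟩
  exact R.mem_maximalIdeal i (hi.trans_le hj)

lemma ideal_smul_top_le {M : Type*} [AddCommGroup M] [Module B M] :
    (R.ideal • ⊤ : Submodule B M) ≤ maximalIdeal B • ⊤ :=
  Submodule.smul_mono_left (R.initialIdeal_le_maximalIdeal le_rfl)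

lemma mem_smul_top_of_sum_eq_zero {G : GradedFree B} {a : ℕ → G}
    (ha : ∑ i ∈ Finset.range R.length, R.x i • a i = 0) {i : ℕ} (hi : i < R.length) :
    a i ∈ (R.ideal • ⊤ : Submodule B G) :=
  mem_smul_top_of_sum_smul_eq_zero (fun i hi => (R.isRegularModulo i hi).of_basis G.basis) ha i hi

end LocalRegularSequence

/-- A lifting to `B` of a complex of free modules over `B ⧸ (x)`: a graded free module with an
endomorphism of degree `1` whose square vanishes modulo the regular sequence. -/
structure LiftedComplex (R : LocalRegularSequence B) where
  F : GradedFree B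
  d : F →ₗ[B] F
  isHomogeneous_d : GradedFree.IsHomogeneous 1 d
  d_d_mem : ∀ v, d (d v) ∈ (R.ideal • ⊤ : Submodule B F)

variable {R : LocalRegularSequence B}

namespace LiftedComplex

section Homology

variable (S S' : LiftedComplex R)

/-- The submodule `𝔪 F`. -/
abbrev mF : Submodule B S.F := maximalIdeal B • ⊤

/-- The cycles of `F` modulo `𝔪 F`, as a submodule of `F`. -/
def cycles : Submodule B S.F := S.mF.comap S.d

/-- The boundaries of `F` modulo `J F`, as a submodule of `F`. -/
def boundariesMod (J : Ideal B) : Submodule B S.F := LinearMap.range S.d ⊔ J • ⊤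

/-- The boundaries of `F` modulo `𝔪 F`, as a submodule of `F`. -/
abbrev boundaries : Submodule B S.F := S.boundariesMod (maximalIdeal B)

variable {S S'} in
lemma mem_boundariesMod {J : Ideal B} {v : S.F} :
    v ∈ S.boundariesMod J ↔ ∃ w, v - S.d w ∈ (J • ⊤ : Submodule B S.F) := by
  rw [boundariesMod, Submodule.mem_sup]
  constructor
  · rintro ⟨_, ⟨w, rfl⟩, z, hz, rfl⟩
    exact ⟨w, by rwa [add_sub_cancel_left]⟩
  · rintro ⟨w, hw⟩
    exact ⟨_, ⟨w, rfl⟩, _, hw, add_sub_cancel _ _⟩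

variable {S S'} in
lemma mem_boundaries {v : S.F} : v ∈ S.boundaries ↔ ∃ w, v - S.d w ∈ S.mF := mem_boundariesMod

lemma smul_top_le_boundariesMod (J : Ideal B) : J • ⊤ ≤ S.boundariesMod J := le_sup_right

lemma d_mem_boundariesMod (J : Ideal B) (w : S.F) : S.d w ∈ S.boundariesMod J :=
  Submodule.mem_sup_left ⟨w, rfl⟩

/-- The homology of `F ⧸ 𝔪 F`. -/
def Homology : Type u := S.cycles ⧸ S.boundaries.comap S.cycles.subtype

noncomputable instance : AddCommGroup S.Homology :=
  inferInstanceAs (AddCommGroup (S.cycles ⧸ S.boundaries.comap S.cycles.subtype))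

noncomputable instance : Module B S.Homology :=
  inferInstanceAs (Module B (S.cycles ⧸ S.boundaries.comap S.cycles.subtype))

/-- The homology class of a cycle. -/
noncomputable def homologyClass : S.cycles →ₗ[B] S.Homology :=
  Submodule.mkQ (S.boundaries.comap S.cycles.subtype)

lemma homologyClass_surjective : Function.Surjective S.homologyClass := Submodule.mkQ_surjective _

variable {S S'}

lemma homologyClass_eq_zero {z : S.cycles} : S.homologyClass z = 0 ↔ (z : S.F) ∈ S.boundaries :=
  Submodule.Quotient.mk_eq_zero (S.boundaries.comap S.cycles.subtype)

lemma homologyClass_eq {z w : S.cycles} :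
    S.homologyClass z = S.homologyClass w ↔ (z - w : S.F) ∈ S.boundaries := by
  rw [← sub_eq_zero, ← map_sub, homologyClass_eq_zero, Submodule.coe_sub]

lemma proj_mem_cycles (n : ℤ) {v : S.F} (hv : v ∈ S.cycles) : S.F.proj n v ∈ S.cycles := by
  rw [cycles, Submodule.mem_comap, S.isHomogeneous_d]
  exact map_mem_smul_top _ hv

variable (S) in
lemma proj_d (n : ℤ) (v : S.F) : S.F.proj n (S.d v) = S.d (S.F.proj (n - 1) v) := by
  rw [S.isHomogeneous_d, sub_add_cancel]

lemma proj_mem_boundariesMod {J : Ideal B} (n : ℤ) {v : S.F} (hv : v ∈ S.boundariesMod J) :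
    S.F.proj n v ∈ S.boundariesMod J := by
  obtain ⟨w, hw⟩ := mem_boundariesMod.1 hv
  refine mem_boundariesMod.2 ⟨S.F.proj (n - 1) w, ?_⟩
  rw [← S.proj_d, ← map_sub]
  exact map_mem_smul_top _ hw

variable (S) in
/-- The projection of the homology onto its component of degree `n`. -/
noncomputable def component (n : ℤ) : S.Homology →ₗ[B] S.Homology :=
  Submodule.mapQ (S.boundaries.comap S.cycles.subtype) (S.boundaries.comap S.cycles.subtype)
    ((S.F.proj n).restrict fun _ => proj_mem_cycles n) fun _ => proj_mem_boundariesMod n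

lemma component_homologyClass (n : ℤ) (z : S.cycles) :
    S.component n (S.homologyClass z) =
      S.homologyClass ⟨S.F.proj n z, proj_mem_cycles n z.2⟩ := rfl

variable (S)

lemma component_component_self (n : ℤ) (a : S.Homology) :
    S.component n (S.component n a) = S.component n a := by
  obtain ⟨z, rfl⟩ := S.homologyClass_surjective a
  simp only [component_homologyClass, GradedFree.proj_proj_self]

lemma component_component_of_ne {m n : ℤ} (h : m ≠ n) (a : S.Homology) :
    S.component m (S.component n a) = 0 := by
  obtain ⟨z, rfl⟩ := S.homologyClass_surjective a
  simp only [component_homologyClass, S.F.proj_proj_of_ne h]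
  exact map_zero S.homologyClass

lemma exists_eq_sum_component (a : S.Homology) :
    ∃ s : Finset ℤ, ∀ t, s ⊆ t → a = ∑ n ∈ t, S.component n a := by
  obtain ⟨z, rfl⟩ := S.homologyClass_surjective a
  obtain ⟨s, hs⟩ := S.F.exists_eq_sum_proj (z : S.F)
  refine ⟨s, fun t ht => ?_⟩
  simp only [component_homologyClass]
  rw [← map_sum]
  congr 1
  ext
  simpa using hs t ht

variable {S}

/-- The linear map `T` commutes with the differentials up to the sign `ε` and modulo `(x)`. -/
def IsChainMap (ε : ℤˣ) (T : S.F →ₗ[B] S'.F) : Prop :=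
  ∀ v, S'.d (T v) - ε • T (S.d v) ∈ (R.ideal • ⊤ : Submodule B S'.F)

namespace IsChainMap

variable {ε : ℤˣ} {T U : S.F →ₗ[B] S'.F}

lemma map_mem_cycles (h : IsChainMap ε T) {v : S.F} (hv : v ∈ S.cycles) : T v ∈ S'.cycles := by
  have hTd : ε • T (S.d v) ∈ S'.mF := by
    rw [Units.smul_def]
    exact Submodule.smul_of_tower_mem _ _ (map_mem_smul_top T hv)
  exact (Submodule.sub_mem_iff_left _ hTd).1 (R.ideal_smul_top_le (h v))

lemma map_mem_boundaries (h : IsChainMap ε T) {v : S.F} (hv : v ∈ S.boundaries) :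
    T v ∈ S'.boundaries := by
  obtain ⟨w, hw⟩ := mem_boundaries.1 hv
  refine mem_boundaries.2 ⟨ε • T w, ?_⟩
  have hTw := R.ideal_smul_top_le (h w)
  have hTv := map_mem_smul_top T hw
  rw [map_sub] at hTv
  rcases Int.units_eq_one_or ε with rfl | rfl
  · simpa using sub_mem hTv hTw
  · simpa using add_mem hTv hTw

/-- The map induced on homology. -/
noncomputable def map (h : IsChainMap ε T) : S.Homology →ₗ[B] S'.Homology :=
  Submodule.mapQ (S.boundaries.comap S.cycles.subtype) (S'.boundaries.comap S'.cycles.subtype)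
    (T.restrict fun _ => h.map_mem_cycles) fun _ => h.map_mem_boundaries

lemma map_homologyClass (h : IsChainMap ε T) (z : S.cycles) :
    h.map (S.homologyClass z) = S'.homologyClass ⟨T z, h.map_mem_cycles z.2⟩ := rfl

lemma map_component (h : IsChainMap ε T) {s : ℤ} (hT : GradedFree.IsHomogeneous s T) (n : ℤ)
    (a : S.Homology) : h.map (S.component n a) = S'.component (n + s) (h.map a) := by
  obtain ⟨z, rfl⟩ := S.homologyClass_surjective a
  simp only [component_homologyClass, map_homologyClass, hT n]

lemma add (hT : IsChainMap ε T) (hU : IsChainMap ε U) : IsChainMap ε (T + U) := by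
  intro v
  simpa only [LinearMap.add_apply, map_add, smul_add, add_sub_add_comm] using
    add_mem (hT v) (hU v)

lemma id : IsChainMap 1 (LinearMap.id : S.F →ₗ[B] S.F) := by
  intro v
  simp

lemma comp {T U : S.F →ₗ[B] S.F} (hT : IsChainMap 1 T) (hU : IsChainMap 1 U) :
    IsChainMap 1 (T ∘ₗ U) := by
  intro v
  simpa using add_mem (hT (U v)) (map_mem_smul_top T (hU v))

end IsChainMap

end Homology

section EisenbudOperators

variable (S S' : LiftedComplex R)

/-- A system of Eisenbud operators: coefficients of `d²` with respect to the regular sequence. -/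
def IsEisenbudSystem (χ : ℕ → S.F →ₗ[B] S.F) : Prop :=
  ∀ v, S.d (S.d v) = ∑ i ∈ Finset.range R.length, R.x i • χ i v

lemma exists_isEisenbudSystem : ∃ χ : ℕ → S.F →ₗ[B] S.F,
    (∀ i, GradedFree.IsHomogeneous 2 (χ i)) ∧ S.IsEisenbudSystem χ :=
  (S.isHomogeneous_d.comp S.isHomogeneous_d).exists_coefficients S.d_d_mem

variable {S S'}

lemma sum_smul_commutator_eq_zero {j : ℕ} {g : ℕ → S.F →ₗ[B] S.F}
    (hg : ∀ v, S.d (S.d v) = ∑ i ∈ Finset.range j, R.x i • g i v) (v : S.F) :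
    ∑ i ∈ Finset.range j, R.x i • (S.d (g i v) - g i (S.d v)) = 0 := by
  simp only [smul_sub, Finset.sum_sub_distrib, ← map_smul, ← map_sum]
  simp only [map_smul, ← hg v, ← hg (S.d v), sub_self]

lemma isEisenbudSystem_ite {j : ℕ} (hj : j ≤ R.length) {g : ℕ → S.F →ₗ[B] S.F}
    (hg : ∀ v, S.d (S.d v) = ∑ i ∈ Finset.range j, R.x i • g i v) :
    S.IsEisenbudSystem fun i => if i < j then g i else 0 := by
  intro v
  refine (hg v).trans (Finset.sum_subset_zero_on_sdiff (Finset.range_mono hj) (fun i hi => ?_)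
    fun i hi => ?_)
  · have hij : ¬ i < j := by simpa using (Finset.mem_sdiff.1 hi).2
    simp only [if_neg hij, LinearMap.zero_apply, smul_zero]
  · simp only [if_pos (Finset.mem_range.1 hi)]

lemma IsEisenbudSystem.isChainMap {χ : ℕ → S.F →ₗ[B] S.F} (h : S.IsEisenbudSystem χ) {i : ℕ}
    (hi : i < R.length) : IsChainMap 1 (χ i) := by
  intro v
  rw [one_smul]
  exact R.mem_smul_top_of_sum_eq_zero (a := fun i => S.d (χ i v) - χ i (S.d v))
    (sum_smul_commutator_eq_zero h v) hi

/-- Comparing the coefficients of `d² T = T d²` gives a homotopy between `χ' T` and `T χ`. -/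
lemma IsChainMap.exists_homotopy {ε : ℤˣ} {T : S.F →ₗ[B] S'.F} (hT : IsChainMap ε T)
    {χ : ℕ → S.F →ₗ[B] S.F} (hχ : S.IsEisenbudSystem χ) {χ' : ℕ → S'.F →ₗ[B] S'.F}
    (hχ' : S'.IsEisenbudSystem χ') {i : ℕ} (hi : i < R.length) :
    ∃ h : S.F →ₗ[B] S'.F, ∀ v,
      χ' i (T v) - T (χ i v) - (S'.d (h v) + ε • h (S.d v)) ∈ S'.mF := by
  choose a ha using fun k => mem_initialIdeal_smul_top.1 (hT (S.F.basis k))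
  let h i := S.F.basis.constr B fun k => a k i
  have hh : ∀ v, S'.d (T v) - ε • T (S.d v) = ∑ i ∈ Finset.range R.length, R.x i • h i v := by
    intro v
    suffices S'.d ∘ₗ T - ε • T ∘ₗ S.d = ∑ i ∈ Finset.range R.length, R.x i • h i by
      simpa using LinearMap.congr_fun this v
    refine S.F.basis.ext fun k => ?_
    simpa [h, Module.Basis.constr_basis] using ha k
  refine ⟨h i, fun v => R.ideal_smul_top_le (R.mem_smul_top_of_sum_eq_zero
    (a := fun i => χ' i (T v) - T (χ i v) - (S'.d (h i v) + ε • h i (S.d v))) ?_ hi)⟩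
  have hTd : T (S.d (S.d v)) = ∑ i ∈ Finset.range R.length, R.x i • T (χ i v) := by
    simp only [hχ v, map_sum, map_smul]
  have hdh : S'.d (S'.d (T v) - ε • T (S.d v)) =
      ∑ i ∈ Finset.range R.length, R.x i • S'.d (h i v) := by
    simp only [hh v, map_sum, map_smul]
  have hhd : ε • (S'.d (T (S.d v)) - ε • T (S.d (S.d v))) =
      ∑ i ∈ Finset.range R.length, R.x i • ε • h i (S.d v) := by
    simp only [hh (S.d v), Finset.smul_sum, smul_comm ε]
  simp only [smul_sub, smul_add, Finset.sum_sub_distrib, Finset.sum_add_distrib]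
  rw [← hχ' (T v), ← hTd, ← hdh, ← hhd]
  rcases Int.units_eq_one_or ε with rfl | rfl
  · simp
  · simp only [Units.neg_smul, one_smul, sub_neg_eq_add, map_add]
    abel

/-- For `T = id` this says that the action on homology is independent of the choice of operators. -/
lemma IsChainMap.map_eisenbud {ε : ℤˣ} {T : S.F →ₗ[B] S'.F} (hT : IsChainMap ε T)
    {χ : ℕ → S.F →ₗ[B] S.F} (hχ : S.IsEisenbudSystem χ) {χ' : ℕ → S'.F →ₗ[B] S'.F}
    (hχ' : S'.IsEisenbudSystem χ') {i : ℕ} (hi : i < R.length) (a : S.Homology) :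
    (hχ'.isChainMap hi).map (hT.map a) = hT.map ((hχ.isChainMap hi).map a) := by
  obtain ⟨z, rfl⟩ := S.homologyClass_surjective a
  simp only [map_homologyClass]
  rw [homologyClass_eq, mem_boundaries]
  obtain ⟨h, hh⟩ := hT.exists_homotopy hχ hχ' hi
  refine ⟨h z, ?_⟩
  have hhd : ε • h (S.d z) ∈ S'.mF := by
    rw [Units.smul_def]
    exact Submodule.smul_of_tower_mem _ _ (map_mem_smul_top h z.2)
  simpa [sub_add_eq_sub_sub] using add_mem (hh z) hhd

end EisenbudOperators

section PolynomialAction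

variable (S : LiftedComplex R) {S' : LiftedComplex R}

/-- A choice of homogeneous Eisenbud operators. -/
noncomputable def χ : ℕ → S.F →ₗ[B] S.F := S.exists_isEisenbudSystem.choose

lemma isHomogeneous_χ (i : ℕ) : GradedFree.IsHomogeneous 2 (S.χ i) :=
  S.exists_isEisenbudSystem.choose_spec.1 i

lemma isEisenbudSystem_χ : S.IsEisenbudSystem S.χ := S.exists_isEisenbudSystem.choose_spec.2

lemma isChainMap_χ {i : ℕ} (hi : i < R.length) : IsChainMap 1 (S.χ i) :=
  S.isEisenbudSystem_χ.isChainMap hi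

lemma exists_action : ∃ ρ : R.Operators →ₐ[B] Module.End B S.Homology,
    ∀ i, ρ (MvPolynomial.X i) = (S.isChainMap_χ i.2).map :=
  exists_algHom_of_commute (fun i : Fin R.length => (S.isChainMap_χ i.2).map) fun i k =>
    LinearMap.ext
      ((S.isChainMap_χ k.2).map_eisenbud S.isEisenbudSystem_χ S.isEisenbudSystem_χ i.2)

/-- The action of the polynomial ring on homology. -/
noncomputable def action : R.Operators →ₐ[B] Module.End B S.Homology := S.exists_action.choose

lemma action_X (i : Fin R.length) : S.action (MvPolynomial.X i) = (S.isChainMap_χ i.2).map :=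
  S.exists_action.choose_spec i

noncomputable instance : Module R.Operators S.Homology :=
  Module.compHom S.Homology (S.action : R.Operators →+* Module.End B S.Homology)

lemma smul_def (p : R.Operators) (a : S.Homology) : p • a = S.action p a := rfl

instance : IsScalarTower B R.Operators S.Homology where
  smul_assoc r p a := by rw [smul_def, smul_def, map_smul, LinearMap.smul_apply]

lemma X_smul {χ : ℕ → S.F →ₗ[B] S.F} (hχ : S.IsEisenbudSystem χ) (i : Fin R.length)
    (a : S.Homology) :
    (MvPolynomial.X i : R.Operators) • a = (hχ.isChainMap i.2).map a := by
  rw [smul_def, action_X]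
  obtain ⟨z, rfl⟩ := S.homologyClass_surjective a
  exact IsChainMap.id.map_eisenbud hχ S.isEisenbudSystem_χ i.2 (S.homologyClass z)

variable {S}

/-- The map induced on homology, as a map of modules over the polynomial ring. -/
noncomputable def IsChainMap.polynomialMap {ε : ℤˣ} {T : S.F →ₗ[B] S'.F} (h : IsChainMap ε T) :
    S.Homology →ₗ[R.Operators] S'.Homology where
  toFun := h.map
  map_add' := map_add h.map
  map_smul' p a := by
    rw [RingHom.id_apply]
    induction p using MvPolynomial.induction_on generalizing a with
    | C r =>
      rw [← MvPolynomial.algebraMap_eq, algebraMap_smul, algebraMap_smul, map_smul]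
    | add p q hp hq => rw [add_smul, add_smul, map_add, hp, hq]
    | mul_X p i hp =>
      rw [mul_smul, mul_smul, hp, S.X_smul S.isEisenbudSystem_χ, S'.X_smul S'.isEisenbudSystem_χ,
        h.map_eisenbud S.isEisenbudSystem_χ S'.isEisenbudSystem_χ i.2]

end PolynomialAction

end LiftedComplex

end LiftedComplex

section Exactness

variable {B : Type u} [CommRing B] [IsLocalRing B] {R : LocalRegularSequence B}

namespace LiftedComplex

variable (S : LiftedComplex R) (J : Ideal B)

/-- The lifted complex becomes a complex modulo `J`. -/
def IsComplexMod : Prop :=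
  ∀ v, S.d (S.d v) ∈ (J • ⊤ : Submodule B S.F)

/-- Cycles modulo `J` are boundaries modulo `J`. -/
def IsExactMod : Prop :=
  ∀ v, S.d v ∈ (J • ⊤ : Submodule B S.F) → ∃ w, v - S.d w ∈ (J • ⊤ : Submodule B S.F)

/-- Exactness modulo `J` of the `B`-dual of the lifted complex. -/
def IsDualExactMod : Prop :=
  ∀ φ : S.F →ₗ[B] B, (∀ v, φ (S.d v) ∈ J) → ∃ ψ : S.F →ₗ[B] B, ∀ v, φ v - ψ (S.d v) ∈ J

/-- The data of a cone over `B ⧸ J`: an operator `T` commuting with `d`, together with a scalar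
`r` for which `d² = -r T`. With `r = 0` this is the mapping cone of `T`; with `r = - x j` and `T`
the last Eisenbud operator it kills that operator. -/
structure ConeDatum where
  T : S.F →ₗ[B] S.F
  r : B
  deg : ℤ
  le_ideal : J ≤ R.ideal
  r_mem : r ∈ R.ideal
  isHomogeneous_T : GradedFree.IsHomogeneous deg T
  isHomogeneous_r : GradedFree.IsHomogeneous (2 - deg) (r • LinearMap.id : S.F →ₗ[B] S.F)
  d_T_sub_mem : ∀ v, S.d (T v) - T (S.d v) ∈ (J • ⊤ : Submodule B S.F)
  d_d_add_mem : ∀ v, S.d (S.d v) + r • T v ∈ (J • ⊤ : Submodule B S.F)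

variable {S J}

namespace ConeDatum

variable (D : S.ConeDatum J)

/-- The differential `(a, b) ↦ (d a + T b, r a - d b)` of the cone. -/
def coneD : S.F × S.F →ₗ[B] S.F × S.F :=
  (S.d.coprod D.T).prod ((D.r • LinearMap.id).coprod (-S.d))

lemma coneD_apply (v : S.F × S.F) :
    D.coneD v = (S.d v.1 + D.T v.2, D.r • v.1 - S.d v.2) := by
  simp [coneD, sub_eq_add_neg]

lemma mem_smul_top_prod {J : Ideal B} {v : S.F × S.F} :
    v ∈ (J • ⊤ : Submodule B (S.F × S.F)) ↔
      v.1 ∈ (J • ⊤ : Submodule B S.F) ∧ v.2 ∈ (J • ⊤ : Submodule B S.F) := by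
  refine ⟨fun h => ⟨map_mem_smul_top (LinearMap.fst B S.F S.F) h,
    map_mem_smul_top (LinearMap.snd B S.F S.F) h⟩, fun ⟨h₁, h₂⟩ => ?_⟩
  simpa using add_mem (map_mem_smul_top (LinearMap.inl B S.F S.F) h₁)
    (map_mem_smul_top (LinearMap.inr B S.F S.F) h₂)

lemma coneD_coneD_mem (v : S.F × S.F) :
    D.coneD (D.coneD v) ∈ (J • ⊤ : Submodule B (S.F × S.F)) := by
  rw [mem_smul_top_prod]
  simp only [coneD_apply, map_add, map_sub, map_smul, smul_add]
  constructor
  · convert add_mem (D.d_d_add_mem v.1) (D.d_T_sub_mem v.2) using 1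
    abel
  · convert D.d_d_add_mem v.2 using 1
    abel

lemma isHomogeneous_coneD :
    GradedFree.IsHomogeneous (G := S.F.prodShift S.F (1 - D.deg))
      (H := S.F.prodShift S.F (1 - D.deg)) 1 D.coneD := by
  intro n v
  have hr := D.isHomogeneous_r n v.1
  simp only [LinearMap.smul_apply, LinearMap.id_apply] at hr
  rw [GradedFree.proj_prodShift, GradedFree.proj_prodShift, coneD_apply, coneD_apply]
  simp only [map_add, map_sub, S.isHomogeneous_d _ _, D.isHomogeneous_T _ _, hr]
  rw [show n + (1 - D.deg) + D.deg = n + 1 by ring, show n + (2 - D.deg) = n + 1 + (1 - D.deg) by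
    ring, show n + (1 - D.deg) + 1 = n + 1 + (1 - D.deg) by ring]

/-- The cone of a cone datum. -/
noncomputable abbrev cone : LiftedComplex R where
  F := S.F.prodShift S.F (1 - D.deg)
  d := D.coneD
  isHomogeneous_d := D.isHomogeneous_coneD
  d_d_mem v := Submodule.smul_mono_left D.le_ideal (D.coneD_coneD_mem v)

lemma isComplexMod_cone : D.cone.IsComplexMod J := D.coneD_coneD_mem

/-- When `r = 0` the last hypothesis follows from exactness of `S` modulo `J`; when `r` is regular
modulo `J` it holds with `w = 0`. -/
lemma isExactMod_cone (hS : S.IsExactMod (J ⊔ Ideal.span {D.r}))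
    (hr : ∀ a, S.d a ∈ (J • ⊤ : Submodule B S.F) → D.r • a ∈ (J • ⊤ : Submodule B S.F) →
      ∃ w, a - S.d w ∈ (J • ⊤ : Submodule B S.F) ∧ D.r • w ∈ (J • ⊤ : Submodule B S.F)) :
    D.cone.IsExactMod J := by
  intro (v : S.F × S.F) hv
  obtain ⟨-, hv₂⟩ := mem_smul_top_prod.1 hv
  rw [coneD_apply] at hv₂
  obtain ⟨w, hw⟩ := hS v.2 (mem_sup_span_singleton_smul_top.2 ⟨v.1, by simpa using neg_mem hv₂⟩)
  obtain ⟨u, hu⟩ := mem_sup_span_singleton_smul_top.1 hw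
  let v' := v - D.coneD (u, -w)
  have hv'₂ : v'.2 ∈ (J • ⊤ : Submodule B S.F) := by
    convert hu using 1
    simp only [v', coneD_apply, Prod.snd_sub, map_neg]
    abel
  have hdv' : D.coneD v' ∈ (J • ⊤ : Submodule B (S.F × S.F)) := by
    rw [map_sub]
    exact sub_mem hv (D.coneD_coneD_mem _)
  rw [mem_smul_top_prod, coneD_apply] at hdv'
  obtain ⟨w', hw', hrw'⟩ := hr v'.1
    ((Submodule.add_mem_iff_left _ (map_mem_smul_top D.T hv'₂)).1 hdv'.1)
    ((Submodule.sub_mem_iff_left _ (map_mem_smul_top S.d hv'₂)).1 hdv'.2)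
  refine ⟨((u, -w) + (w', 0) : S.F × S.F), mem_smul_top_prod.2 ?_⟩
  rw [map_add, ← sub_sub]
  change (v' - _).1 ∈ _ ∧ (v' - _).2 ∈ _
  simpa [coneD_apply] using ⟨hw', sub_mem hv'₂ hrw'⟩

lemma isDualExactMod_cone (hS : S.IsDualExactMod (J ⊔ Ideal.span {D.r}))
    (hr : ∀ φ : S.F →ₗ[B] B, (∀ v, φ (S.d v) ∈ J) → (∀ v, D.r * φ v ∈ J) →
      ∃ ψ : S.F →ₗ[B] B, (∀ v, φ v - ψ (S.d v) ∈ J) ∧ ∀ v, D.r * ψ v ∈ J) :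
    D.cone.IsDualExactMod J := by
  intro (φ : S.F × S.F →ₗ[B] B) hφ
  have hφ₁ (a : S.F) : φ (S.d a, 0) + D.r * φ (0, a) ∈ J := by
    rw [← smul_eq_mul, ← map_smul, ← map_add]
    simpa [coneD_apply] using hφ ((a, 0) : S.F × S.F)
  have hφ₂ (b : S.F) : φ (D.T b, 0) - φ (0, S.d b) ∈ J := by
    rw [← map_sub]
    simpa [coneD_apply] using hφ ((0, b) : S.F × S.F)
  obtain ⟨ψ, hψ⟩ := hS (φ ∘ₗ LinearMap.inl B S.F S.F) fun a => by
    rw [← mem_smul_top_self, mem_sup_span_singleton_smul_top]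
    exact ⟨-φ (0, a), mem_smul_top_self.2 (by simpa using hφ₁ a)⟩
  obtain ⟨u, hu⟩ := GradedFree.exists_linearMap_sub_smul_mem
    (φ := φ ∘ₗ LinearMap.inl B S.F S.F - ψ ∘ₗ S.d) (by simpa using hψ)
  simp only [LinearMap.sub_apply, LinearMap.comp_apply, LinearMap.inl_apply] at hu
  have hdd (χ : S.F →ₗ[B] B) (b : S.F) : χ (S.d (S.d b)) + D.r * χ (D.T b) ∈ J := by
    simpa using mem_smul_top_self.1 (map_mem_smul_top χ (D.d_d_add_mem b))
  have hdT (b : S.F) : ψ (S.d (D.T b)) - ψ (D.T (S.d b)) ∈ J := by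
    simpa using mem_smul_top_self.1 (map_mem_smul_top ψ (D.d_T_sub_mem b))
  obtain ⟨ρ, hρ, hrρ⟩ := hr (φ ∘ₗ LinearMap.inr B S.F S.F - ψ ∘ₗ D.T + u ∘ₗ S.d) (fun b => by
    simp only [LinearMap.add_apply, LinearMap.sub_apply, LinearMap.comp_apply,
      LinearMap.inr_apply]
    convert add_mem (sub_mem (add_mem (hu (D.T b)) (hdd u b)) (hφ₂ b)) (hdT b) using 1
    ring) fun b => by
    simp only [LinearMap.add_apply, LinearMap.sub_apply, LinearMap.comp_apply,
      LinearMap.inr_apply]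
    convert sub_mem (sub_mem (hφ₁ b) (hu (S.d b))) (hdd ψ b) using 1
    ring
  simp only [LinearMap.add_apply, LinearMap.sub_apply, LinearMap.comp_apply,
    LinearMap.inr_apply] at hρ
  refine ⟨(ψ.coprod (u - ρ) : S.F × S.F →ₗ[B] B), fun (v : S.F × S.F) => ?_⟩
  convert add_mem (add_mem (hu v.1) (hρ v.2)) (hrρ v.1) using 1
  have hv : φ v = φ (v.1, 0) + φ (0, v.2) := by rw [← map_add]; simp
  rw [coneD_apply, hv]
  simp only [LinearMap.coprod_apply, LinearMap.sub_apply, map_add, map_sub, map_smul, smul_eq_mul]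
  ring

lemma isChainMap_T : IsChainMap 1 D.T := fun v => by
  rw [one_smul]
  exact Submodule.smul_mono_left D.le_ideal (D.d_T_sub_mem v)

lemma isChainMap_inl : IsChainMap (S' := D.cone) 1 (LinearMap.inl B S.F S.F) := fun a => by
  rw [mem_smul_top_prod]
  simpa [coneD_apply] using Submodule.smul_mem_smul D.r_mem (Submodule.mem_top (x := a))

lemma isChainMap_snd : IsChainMap (S := D.cone) (-1) (LinearMap.snd B S.F S.F) :=
  fun (v : S.F × S.F) => by
    simpa [coneD_apply] using Submodule.smul_mem_smul D.r_mem (Submodule.mem_top (x := v.1))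

lemma isHomogeneous_inl : GradedFree.IsHomogeneous (H := D.cone.F) 0 (LinearMap.inl B S.F S.F) :=
  fun n a => by rw [GradedFree.proj_prodShift, add_zero]; simp

lemma isHomogeneous_snd :
    GradedFree.IsHomogeneous (G := D.cone.F) (1 - D.deg) (LinearMap.snd B S.F S.F) :=
  fun n v => by rw [GradedFree.proj_prodShift]; rfl

/-- The action of `T` on homology. -/
noncomputable abbrev homologyT : S.Homology →ₗ[R.Operators] S.Homology :=
  D.isChainMap_T.polynomialMap

/-- The map from the homology of the base to that of the cone. -/
noncomputable abbrev homologyInl : S.Homology →ₗ[R.Operators] D.cone.Homology :=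
  D.isChainMap_inl.polynomialMap

/-- The map from the homology of the cone to that of the base, of degree `1 - deg T`. -/
noncomputable abbrev homologySnd : D.cone.Homology →ₗ[R.Operators] S.Homology :=
  D.isChainMap_snd.polynomialMap

lemma r_smul_mem (a : S.F) : D.r • a ∈ S.mF :=
  R.ideal_smul_top_le (Submodule.smul_mem_smul D.r_mem trivial)

lemma mem_cycles_cone {v : S.F × S.F} :
    v ∈ D.cone.cycles ↔ S.d v.1 + D.T v.2 ∈ S.mF ∧ v.2 ∈ S.cycles := by
  change D.coneD v ∈ (maximalIdeal B • ⊤ : Submodule B (S.F × S.F)) ↔ _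
  rw [mem_smul_top_prod, coneD_apply]
  exact and_congr_right fun _ => Submodule.sub_mem_iff_right _ (D.r_smul_mem _)

lemma mem_boundaries_cone {v : S.F × S.F} :
    v ∈ D.cone.boundaries ↔ ∃ a b, v.1 - (S.d a + D.T b) ∈ S.mF ∧ v.2 + S.d b ∈ S.mF := by
  rw [mem_boundaries]
  change (∃ w : S.F × S.F, v - D.coneD w ∈ (maximalIdeal B • ⊤ : Submodule B (S.F × S.F))) ↔ _
  simp only [mem_smul_top_prod, Prod.exists, coneD_apply, Prod.fst_sub, Prod.snd_sub]
  refine exists₂_congr fun a b => and_congr_right fun _ => ?_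
  rw [← sub_add, sub_add_eq_add_sub, Submodule.sub_mem_iff_left _ (D.r_smul_mem _)]

lemma exact_homologyT_homologyInl : Function.Exact D.homologyT D.homologyInl := by
  intro a
  obtain ⟨z, rfl⟩ := S.homologyClass_surjective a
  change D.isChainMap_inl.map _ = 0 ↔ ∃ b, D.isChainMap_T.map b = _
  rw [IsChainMap.map_homologyClass, homologyClass_eq_zero, mem_boundaries_cone]
  simp only [LinearMap.inl_apply, zero_add]
  constructor
  · rintro ⟨a, b, hab, hb⟩
    refine ⟨S.homologyClass ⟨b, hb⟩, ?_⟩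
    rw [IsChainMap.map_homologyClass, homologyClass_eq, mem_boundaries]
    refine ⟨-a, ?_⟩
    convert neg_mem hab using 1
    rw [map_neg]
    abel
  · rintro ⟨b, hb⟩
    obtain ⟨b, rfl⟩ := S.homologyClass_surjective b
    rw [IsChainMap.map_homologyClass, homologyClass_eq, mem_boundaries] at hb
    obtain ⟨w, hw⟩ := hb
    refine ⟨-w, b, ?_, b.2⟩
    convert neg_mem hw using 1
    rw [map_neg]
    abel

lemma exact_homologyInl_homologySnd : Function.Exact D.homologyInl D.homologySnd := by
  intro c
  obtain ⟨v, rfl⟩ := D.cone.homologyClass_surjective c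
  obtain ⟨hv₁, -⟩ := D.mem_cycles_cone.1 v.2
  change D.isChainMap_snd.map _ = 0 ↔ ∃ a, D.isChainMap_inl.map a = _
  rw [IsChainMap.map_homologyClass, homologyClass_eq_zero, mem_boundaries]
  constructor
  · rintro ⟨w, hw⟩
    have hcycle : (v : S.F × S.F).1 + D.T w ∈ S.cycles := by
      have hT := add_mem (R.ideal_smul_top_le (D.isChainMap_T w))
        (sub_mem hv₁ (map_mem_smul_top D.T hw))
      change S.d _ ∈ S.mF
      convert hT using 1
      simp only [map_add, map_sub, one_smul, LinearMap.snd_apply]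
      abel
    refine ⟨S.homologyClass ⟨_, hcycle⟩, ?_⟩
    rw [IsChainMap.map_homologyClass, homologyClass_eq]
    refine D.mem_boundaries_cone.2 ⟨0, w, ?_, ?_⟩
    · simp
    · convert neg_mem hw using 1
      simp [neg_add_eq_sub]
  · rintro ⟨a, ha⟩
    obtain ⟨z, rfl⟩ := S.homologyClass_surjective a
    rw [IsChainMap.map_homologyClass, homologyClass_eq] at ha
    obtain ⟨-, b, -, hb⟩ := D.mem_boundaries_cone.1 ha
    refine ⟨b, ?_⟩
    convert neg_mem hb using 1
    simp only [LinearMap.inl_apply, Prod.snd_sub, LinearMap.snd_apply, zero_sub]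
    abel

lemma exact_homologySnd_homologyT : Function.Exact D.homologySnd D.homologyT := by
  intro b
  obtain ⟨z, rfl⟩ := S.homologyClass_surjective b
  change D.isChainMap_T.map _ = 0 ↔ ∃ c, D.isChainMap_snd.map c = _
  rw [IsChainMap.map_homologyClass, homologyClass_eq_zero, mem_boundaries]
  constructor
  · rintro ⟨w, hw⟩
    refine ⟨D.cone.homologyClass ⟨((-w, z) : S.F × S.F), D.mem_cycles_cone.2 ⟨?_, z.2⟩⟩, rfl⟩
    rwa [map_neg, neg_add_eq_sub]
  · rintro ⟨c, hc⟩
    obtain ⟨v, rfl⟩ := D.cone.homologyClass_surjective c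
    obtain ⟨hv₁, -⟩ := D.mem_cycles_cone.1 v.2
    rw [IsChainMap.map_homologyClass, homologyClass_eq] at hc
    have hTz : D.T z ∈ S.boundaries := by
      have h := D.isChainMap_T.map_mem_boundaries hc
      rw [map_sub] at h
      refine (Submodule.sub_mem_iff_right _ ?_).1 h
      refine mem_boundaries.2 ⟨-(v : S.F × S.F).1, ?_⟩
      convert hv₁ using 1
      rw [map_neg, sub_neg_eq_add, add_comm]
      rfl
    exact mem_boundaries.1 hTz

end ConeDatum

end LiftedComplex

end Exactness

section FiniteGeneration

lemma exists_fg_le_map_eq {P M N : Type*} [Ring P] [AddCommGroup M] [Module P M] [AddCommGroup N]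
    [Module P N] (f : M →ₗ[P] N) {K : Submodule P M} (h : (K.map f).FG) :
    ∃ L ≤ K, L.FG ∧ L.map f = K.map f := by
  classical
  obtain ⟨t, ht⟩ := h
  obtain ⟨s, hs, rfl⟩ := Finset.subset_set_image_iff.1
    (show (t : Set N) ⊆ f '' K from fun y hy => by
      rw [← Submodule.map_coe, ← ht]
      exact Submodule.subset_span hy)
  exact ⟨Submodule.span P s, Submodule.span_le.2 hs, Submodule.fg_span s.finite_toSet,
    by rw [Submodule.map_span, ← ht, Finset.coe_image]⟩

lemma fg_of_le {P M : Type*} [Ring P] [IsNoetherianRing P] [AddCommGroup M] [Module P M]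
    {N N' : Submodule P M} (h : N ≤ N') (hN' : N'.FG) : N.FG :=
  have := isNoetherian_of_fg_of_noetherian N' hN'
  have := isNoetherian_of_le h
  (Submodule.fg_top N).1 (IsNoetherian.noetherian _)

variable {B : Type u} [CommRing B] [IsLocalRing B] {R : LocalRegularSequence B}

namespace LiftedComplex

variable (S : LiftedComplex R)

instance isNoetherian_range_component [IsNoetherianRing B] (n : ℤ) :
    IsNoetherian B (LinearMap.range (S.component n)) := by
  have hle : LinearMap.range (S.F.proj n) ⊓ S.cycles ≤ LinearMap.range (S.F.proj n) := inf_le_left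
  have := isNoetherian_of_le hle
  let f : (LinearMap.range (S.F.proj n) ⊓ S.cycles : Submodule B S.F) →ₗ[B] S.Homology :=
    S.homologyClass ∘ₗ Submodule.inclusion inf_le_right
  have hf : LinearMap.range (S.component n) ≤ LinearMap.range f := by
    rintro _ ⟨a, rfl⟩
    obtain ⟨z, rfl⟩ := S.homologyClass_surjective a
    exact ⟨⟨S.F.proj n z, ⟨z, rfl⟩, proj_mem_cycles n z.2⟩, rfl⟩
  exact isNoetherian_of_le hf

variable {S}

lemma component_X_smul (i : Fin R.length) (m : ℤ) (a : S.Homology) :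
    S.component m ((MvPolynomial.X i : R.Operators) • a) =
      (MvPolynomial.X i : R.Operators) • S.component (m - 2) a := by
  rw [S.X_smul S.isEisenbudSystem_χ, S.X_smul S.isEisenbudSystem_χ,
    IsChainMap.map_component _ (S.isHomogeneous_χ i), sub_add_cancel]

variable (S) in
/-- The submodule of homology classes all of whose components have degree at least `n`. -/
def truncation (n : ℤ) : Submodule R.Operators S.Homology where
  carrier := {a | ∀ m < n, S.component m a = 0}
  zero_mem' _ _ := map_zero _
  add_mem' {a b} ha hb m hm := by rw [map_add, ha m hm, hb m hm, add_zero]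
  smul_mem' p := by
    simp only [Set.mem_ofPred_eq]
    induction p using MvPolynomial.induction_on with
    | C r =>
      intro a ha m hm
      rw [← MvPolynomial.algebraMap_eq, algebraMap_smul, map_smul, ha m hm, smul_zero]
    | add p q hp hq =>
      intro a ha m hm
      rw [add_smul, map_add, hp ha m hm, hq ha m hm, add_zero]
    | mul_X p i hp =>
      intro a ha m hm
      rw [mul_smul]
      refine hp (fun k hk => ?_) m hm
      rw [component_X_smul, ha _ (by omega), smul_zero]

lemma component_mem_truncation {n m : ℤ} (h : n ≤ m) (a : S.Homology) :
    S.component m a ∈ S.truncation n :=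
  fun _ hk => S.component_component_of_ne (by omega) a

/-- A submodule of the homology containing the components of its elements. -/
def IsGraded (G : Submodule R.Operators S.Homology) : Prop :=
  ∀ m, ∀ a ∈ G, S.component m a ∈ G

lemma isGraded_truncation (n : ℤ) : IsGraded (S.truncation n) := by
  intro m a ha
  rcases le_or_gt n m with hm | hm
  · exact component_mem_truncation hm a
  · rw [ha m hm]
    exact zero_mem _

lemma component_smul_mem {G : Submodule R.Operators S.Homology} (p : R.Operators)
    {a : S.Homology} (ha : ∀ m, S.component m a ∈ G) (m : ℤ) : S.component m (p • a) ∈ G := by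
  induction p using MvPolynomial.induction_on generalizing a m with
  | C r =>
    rw [← MvPolynomial.algebraMap_eq, algebraMap_smul, map_smul]
    exact Submodule.smul_of_tower_mem _ r (ha m)
  | add p q hp hq =>
    rw [add_smul, map_add]
    exact add_mem (hp ha m) (hq ha m)
  | mul_X p i hp =>
    rw [mul_smul]
    refine hp (fun k => ?_) m
    rw [component_X_smul]
    exact G.smul_mem _ (ha _)

lemma isGraded_span {T : Set S.Homology}
    (hT : ∀ m, ∀ a ∈ T, S.component m a ∈ Submodule.span R.Operators T) :
    IsGraded (Submodule.span R.Operators T) := by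
  intro m a ha
  induction ha using Submodule.span_induction generalizing m with
  | mem a ha => exact hT m a ha
  | zero => rw [map_zero]; exact zero_mem _
  | add a b _ _ ha hb => rw [map_add]; exact add_mem (ha m) (hb m)
  | smul p a _ ha => exact component_smul_mem p ha m

lemma exists_fg_isGraded {N K : Submodule R.Operators S.Homology} (hN : N.FG) (hNK : N ≤ K)
    (hK : IsGraded K) : ∃ G, N ≤ G ∧ G ≤ K ∧ G.FG ∧ IsGraded G := by
  classical
  obtain ⟨t, rfl⟩ := hN
  choose s hs using S.exists_eq_sum_component
  let T : Finset S.Homology := t.biUnion fun a => (s a).image fun m => S.component m a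
  have hT : ∀ b ∈ T, ∃ a ∈ t, ∃ m, S.component m a = b := by
    intro b hb
    obtain ⟨a, ha, hb⟩ := Finset.mem_biUnion.1 hb
    obtain ⟨m, -, rfl⟩ := Finset.mem_image.1 hb
    exact ⟨a, ha, m, rfl⟩
  refine ⟨Submodule.span R.Operators T, ?_, ?_, ⟨T, rfl⟩, isGraded_span fun m b hb => ?_⟩
  · refine Submodule.span_le.2 fun a ha => ?_
    rw [hs a _ subset_rfl]
    exact Submodule.sum_mem _ fun m hm => Submodule.subset_span <|
      Finset.mem_biUnion.2 ⟨a, ha, Finset.mem_image_of_mem _ hm⟩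
  · refine Submodule.span_le.2 fun b hb => ?_
    obtain ⟨a, ha, m, rfl⟩ := hT b hb
    exact hK m a (hNK (Submodule.subset_span ha))
  · obtain ⟨a, -, k, rfl⟩ := hT b hb
    rcases eq_or_ne m k with rfl | hmk
    · rw [component_component_self]
      exact Submodule.subset_span hb
    · rw [component_component_of_ne _ hmk]
      exact zero_mem _

lemma mem_of_component_mem {G : Submodule R.Operators S.Homology} {a : S.Homology}
    (h : ∀ m, S.component m a ∈ G) : a ∈ G := by
  obtain ⟨s, hs⟩ := S.exists_eq_sum_component a
  rw [hs s subset_rfl]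
  exact Submodule.sum_mem _ fun m _ => h m

variable (S) in
/-- Every truncation of the homology is finitely generated over the polynomial ring. -/
def FGTruncations : Prop := ∀ n, (S.truncation n).FG

lemma fg_span_range_component [IsNoetherianRing B] (n : ℤ) :
    (Submodule.span R.Operators
      (LinearMap.range (S.component n) : Set S.Homology)).FG := by
  obtain ⟨t, ht⟩ := (Submodule.fg_top _).1
    (IsNoetherian.noetherian (⊤ : Submodule B (LinearMap.range (S.component n))))
  rw [← ht, Submodule.span_span_of_tower]
  exact ⟨t, rfl⟩

namespace ConeDatum

variable {J : Ideal B} (D : S.ConeDatum J)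

lemma homologyT_component (m : ℤ) (a : S.Homology) :
    D.homologyT (S.component m a) = S.component (m + D.deg) (D.homologyT a) :=
  D.isChainMap_T.map_component D.isHomogeneous_T m a

lemma homologyInl_component (m : ℤ) (a : S.Homology) :
    D.homologyInl (S.component m a) = D.cone.component m (D.homologyInl a) := by
  have h := D.isChainMap_inl.map_component D.isHomogeneous_inl m a
  rwa [add_zero] at h

lemma homologySnd_component (m : ℤ) (c : D.cone.Homology) :
    D.homologySnd (D.cone.component m c) = S.component (m + (1 - D.deg)) (D.homologySnd c) :=
  D.isChainMap_snd.map_component D.isHomogeneous_snd m c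

lemma map_truncation_le (n : ℤ) :
    (S.truncation n).map D.homologyInl ≤ D.cone.truncation n := by
  rintro _ ⟨a, ha, rfl⟩ m hm
  rw [← homologyInl_component, ha m hm, map_zero]

/-- Modulo the image of `p` the truncation embeds in that of the cone, and `p` has positive
degree. -/
lemma truncation_le_of_map_le {p : R.Operators}
    (hp : ∀ a, D.homologyT a = p • a) (hdeg : 0 < D.deg) {n : ℤ}
    {G : Submodule R.Operators S.Homology} (hG : IsGraded G)
    (hmap : (S.truncation n).map D.homologyInl ≤ G.map D.homologyInl)
    (hlow : ∀ m, n ≤ m → m < n + D.deg → ∀ a, S.component m a ∈ G) : S.truncation n ≤ G := by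
  have hhigh (k : ℕ) (a : S.Homology) : S.component (n + k) a ∈ G := by
    induction k using Nat.strong_induction_on generalizing a with
    | _ k ih =>
      rcases lt_or_ge (k : ℤ) D.deg with hk | hk
      · exact hlow _ (by omega) (by omega) a
      obtain ⟨g, hg, hga⟩ := hmap ⟨_, component_mem_truncation (by omega : n ≤ n + k) a, rfl⟩
      obtain ⟨b, hb⟩ := (D.exact_homologyT_homologyInl (S.component (n + k) a - g)).1
        (by rw [map_sub, hga, sub_self])
      have hpb : p • S.component (n + (k - D.deg)) b = S.component (n + k) (p • b) := by
        rw [← hp, ← hp, homologyT_component, show n + (k - D.deg) + D.deg = n + k by ring]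
      have hcomp := congr_arg (S.component (n + k)) hb
      rw [hp, map_sub, component_component_self, ← hpb, eq_sub_iff_add_eq] at hcomp
      rw [← hcomp]
      obtain ⟨l, hl⟩ := Int.eq_ofNat_of_zero_le (sub_nonneg.2 hk)
      rw [hl]
      exact add_mem (G.smul_mem p (ih l (by omega) b)) (hG _ g hg)
  intro a ha
  refine mem_of_component_mem fun m => ?_
  rcases lt_or_ge m n with hm | hm
  · rw [ha m hm]
    exact zero_mem _
  · obtain ⟨k, hk⟩ := Int.eq_ofNat_of_zero_le (sub_nonneg.2 hm)
    rw [← add_sub_cancel n m, hk]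
    exact hhigh k a

lemma fgTruncations_of_cone [IsNoetherianRing B] {p : R.Operators}
    (hp : ∀ a, D.homologyT a = p • a) (hdeg : 0 < D.deg) (h : D.cone.FGTruncations) :
    S.FGTruncations := by
  intro n
  obtain ⟨L, hLn, hL, hLmap⟩ := exists_fg_le_map_eq D.homologyInl
    (fg_of_le (D.map_truncation_le n) (h n))
  let low : Submodule R.Operators S.Homology :=
    ⨆ m ∈ Finset.Ico n (n + D.deg), Submodule.span R.Operators
      (LinearMap.range (S.component m) : Set S.Homology)
  have hlow : low ≤ S.truncation n := by
    refine iSup₂_le fun m hm => Submodule.span_le.2 ?_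
    rintro _ ⟨a, rfl⟩
    exact component_mem_truncation (Finset.mem_Ico.1 hm).1 a
  obtain ⟨G, hle, hGn, hG, hgraded⟩ := exists_fg_isGraded
    (hL.sup (Submodule.fg_biSup _ _ fun m _ => fg_span_range_component m))
    (sup_le hLn hlow) (isGraded_truncation n)
  suffices S.truncation n ≤ G by rwa [le_antisymm this hGn]
  refine D.truncation_le_of_map_le hp hdeg hgraded ?_ fun m hm hm' a => ?_
  · rw [← hLmap]
    exact Submodule.map_mono (le_sup_left.trans hle)
  · exact (le_sup_right.trans hle) (Submodule.mem_iSup_of_mem m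
      (Submodule.mem_iSup_of_mem (Finset.mem_Ico.2 ⟨hm, hm'⟩) (Submodule.subset_span ⟨a, rfl⟩)))

lemma fgTruncations_cone [IsNoetherianRing B] (h : S.FGTruncations) : D.cone.FGTruncations := by
  intro n
  have hsnd : (D.cone.truncation n).map D.homologySnd ≤ S.truncation (n + (1 - D.deg)) := by
    rintro _ ⟨c, hc, rfl⟩ m hm
    rw [← sub_add_cancel m (1 - D.deg), ← homologySnd_component, hc _ (by omega), map_zero]
  have hker : D.cone.truncation n ⊓ LinearMap.ker D.homologySnd ≤
      (S.truncation n).map D.homologyInl := by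
    rintro c ⟨hc, hc'⟩
    obtain ⟨a, rfl⟩ := (D.exact_homologyInl_homologySnd c).1 hc'
    refine mem_of_component_mem fun m => ?_
    rcases lt_or_ge m n with hm | hm
    · rw [hc m hm]
      exact zero_mem _
    · rw [← homologyInl_component]
      exact ⟨_, component_mem_truncation hm a, rfl⟩
  exact Submodule.fg_of_fg_map_of_fg_inf_ker D.homologySnd (fg_of_le hsnd (h _))
    (fg_of_le hker ((h n).map _))

end ConeDatum

lemma exists_eliminationCone {j : ℕ} (hj : j < R.length)
    (hS : S.IsComplexMod (initialIdeal R.x (j + 1))) :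
    ∃ D : S.ConeDatum (initialIdeal R.x j), D.r = -R.x j ∧ D.deg = 2 ∧
      ∀ a, D.homologyT a = (MvPolynomial.X ⟨j, hj⟩ : R.Operators) • a := by
  obtain ⟨g, hg, hdd⟩ := (S.isHomogeneous_d.comp S.isHomogeneous_d).exists_coefficients hS
  let D : S.ConeDatum (initialIdeal R.x j) :=
    { T := g j
      r := -R.x j
      deg := 2
      le_ideal := initialIdeal_mono hj.le
      r_mem := neg_mem (mem_initialIdeal hj)
      isHomogeneous_T := hg j
      isHomogeneous_r := GradedFree.IsHomogeneous.id.smul _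
      d_T_sub_mem v := by
        refine (R.isRegularModulo j hj).of_basis S.F.basis _ (mem_initialIdeal_smul_top.2
          ⟨fun i => -(S.d (g i v) - g i (S.d v)), ?_⟩)
        simp only [smul_neg, Finset.sum_neg_distrib]
        rw [eq_neg_iff_add_eq_zero, add_comm, ← Finset.sum_range_succ,
          sum_smul_commutator_eq_zero hdd v]
      d_d_add_mem v := by
        refine mem_initialIdeal_smul_top.2 ⟨fun i => g i v, ?_⟩
        rw [← LinearMap.comp_apply, hdd v, Finset.sum_range_succ, neg_smul, add_neg_cancel_right] }
  refine ⟨D, rfl, rfl, fun a => ?_⟩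
  rw [S.X_smul (isEisenbudSystem_ite hj hdd) ⟨j, hj⟩]
  obtain ⟨z, rfl⟩ := S.homologyClass_surjective a
  change D.isChainMap_T.map _ = _
  simp only [IsChainMap.map_homologyClass, D, if_pos (Nat.lt_succ_self j)]

end LiftedComplex

end FiniteGeneration

section ProjectiveDimension

open CategoryTheory

variable {B : Type u} [CommRing B]

/-- The module `M` has projective dimension less than `n`. -/
abbrev ProjDimLT (B : Type u) [CommRing B] (M : Type u) [AddCommGroup M] [Module B M] (n : ℕ) :
    Prop :=
  HasProjectiveDimensionLT (ModuleCat.of B M) n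

section ShortExact

variable {M N Q : Type u} [AddCommGroup M] [Module B M] [AddCommGroup N] [Module B N]
  [AddCommGroup Q] [Module B Q]

lemma projDimLT_one : ProjDimLT B M 1 ↔ Module.Projective B M := by
  rw [ProjDimLT, ← projective_iff_hasProjectiveDimensionLT_one, IsProjective.iff_projective]

lemma exact_mapQ {f : M →ₗ[B] N} {g : N →ₗ[B] Q} {p : Submodule B M} {q : Submodule B N}
    {r : Submodule B Q} (hp : p = q.comap f) (hr : r.comap g = LinearMap.range f ⊔ q) :
    Function.Exact (p.mapQ q f hp.le) (q.mapQ r g (le_sup_right.trans_eq hr.symm)) := by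
  intro y
  obtain ⟨y, rfl⟩ := Submodule.mkQ_surjective q y
  rw [Submodule.mkQ_apply, Submodule.mapQ_apply, Submodule.Quotient.mk_eq_zero,
    ← Submodule.mem_comap, hr, Submodule.mem_sup]
  constructor
  · rintro ⟨_, ⟨x, rfl⟩, z, hz, rfl⟩
    refine ⟨p.mkQ x, ?_⟩
    simpa [Submodule.mapQ_apply] using hz
  · rintro ⟨x, hx⟩
    obtain ⟨x, rfl⟩ := Submodule.mkQ_surjective p x
    rw [Submodule.mkQ_apply, Submodule.mapQ_apply, eq_comm, Submodule.Quotient.eq] at hx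
    exact ⟨f x, ⟨x, rfl⟩, _, hx, add_sub_cancel _ _⟩

lemma shortExact_mapQ {f : M →ₗ[B] N} {g : N →ₗ[B] Q} {p : Submodule B M} {q : Submodule B N}
    {r : Submodule B Q} (hp : p = q.comap f) (hr : r.comap g = LinearMap.range f ⊔ q)
    (hg : Function.Surjective g) :
    (ShortComplex.moduleCatMk (p.mapQ q f hp.le) (q.mapQ r g (le_sup_right.trans_eq hr.symm))
      (exact_mapQ hp hr).linearMap_comp_eq_zero).ShortExact where
  exact := (ShortComplex.ShortExact.moduleCat_exact_iff_function_exact _).2 (exact_mapQ hp hr)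
  mono_f := (ModuleCat.mono_iff_injective _).2 <| by
    refine (injective_iff_map_eq_zero (p.mapQ q f hp.le)).2 fun x hx => ?_
    obtain ⟨x, rfl⟩ := Submodule.mkQ_surjective p x
    rw [Submodule.mkQ_apply, Submodule.mapQ_apply, Submodule.Quotient.mk_eq_zero] at hx
    rwa [Submodule.mkQ_apply, Submodule.Quotient.mk_eq_zero, hp]
  epi_g := (ModuleCat.epi_iff_surjective _).2 fun y => by
    obtain ⟨y, rfl⟩ := Submodule.mkQ_surjective r y
    obtain ⟨x, rfl⟩ := hg y
    exact ⟨q.mkQ x, rfl⟩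

variable {f : M →ₗ[B] N} {g : N →ₗ[B] Q} {p : Submodule B M} {q : Submodule B N}
  {r : Submodule B Q} {n : ℕ}

lemma ProjDimLT.quotient_left (hp : p = q.comap f) (hr : r.comap g = LinearMap.range f ⊔ q)
    (hg : Function.Surjective g) (hq : ProjDimLT B (N ⧸ q) n) (hQ : ProjDimLT B (Q ⧸ r) (n + 1)) :
    ProjDimLT B (M ⧸ p) n :=
  (shortExact_mapQ hp hr hg).hasProjectiveDimensionLT_X₁ n hq hQ

lemma ProjDimLT.quotient_middle (hp : p = q.comap f) (hr : r.comap g = LinearMap.range f ⊔ q)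
    (hg : Function.Surjective g) (hM : ProjDimLT B (M ⧸ p) n) (hQ : ProjDimLT B (Q ⧸ r) n) :
    ProjDimLT B (N ⧸ q) n :=
  (shortExact_mapQ hp hr hg).hasProjectiveDimensionLT_X₂ n hM hQ

lemma ProjDimLT.quotient_right (hp : p = q.comap f) (hr : r.comap g = LinearMap.range f ⊔ q)
    (hg : Function.Surjective g) (hM : ProjDimLT B (M ⧸ p) n) (hN : ProjDimLT B (N ⧸ q) (n + 1)) :
    ProjDimLT B (Q ⧸ r) (n + 1) :=
  (shortExact_mapQ hp hr hg).hasProjectiveDimensionLT_X₃ n hM hN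

lemma ProjDimLT.mono {m : ℕ} (h : ProjDimLT B M n) (hmn : n ≤ m) : ProjDimLT B M m :=
  have : HasProjectiveDimensionLT (ModuleCat.of B M) n := h
  hasProjectiveDimensionLT_of_ge _ n _ hmn

lemma ProjDimLT.of_retract {i : M →ₗ[B] N} {r : N →ₗ[B] M} (hri : r ∘ₗ i = LinearMap.id)
    (h : ProjDimLT B N n) : ProjDimLT B M n :=
  have : HasProjectiveDimensionLT (ModuleCat.of B N) n := h
  Retract.hasProjectiveDimensionLT ⟨ModuleCat.ofHom i, ModuleCat.ofHom r, ModuleCat.hom_ext hri⟩ n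

lemma ProjDimLT.of_linearEquiv (e : M ≃ₗ[B] N) (h : ProjDimLT B N n) : ProjDimLT B M n :=
  h.of_retract e.symm_comp

lemma ProjDimLT.of_ker {g : M →ₗ[B] N} [Module.Projective B M] (hg : Function.Surjective g)
    (h : ProjDimLT B (LinearMap.ker g) (n + 1)) : ProjDimLT B N (n + 2) :=
  (LinearMap.shortExact_shortComplexKer hg).hasProjectiveDimensionLT_X₃ (n + 1) h
    ((projDimLT_one.2 ‹_›).mono (by lia))

end ShortExact

attribute [local instance] FiniteFreeResolution.acg FiniteFreeResolution.mod

/-- The resolution of the first syzygy obtained by discarding the term of degree zero. -/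
def syzygyResolution {M : Type u} [AddCommGroup M] [Module B M] (R : FiniteFreeResolution B M) :
    FiniteFreeResolution B (LinearMap.ker R.aug) where
  len := R.len - 1
  F n := R.F (n + 1)
  free n := R.free _
  fin n := R.fin _
  d n := R.d (n + 1)
  aug := (R.d 0).codRestrict _ fun v => R.ex0.le ⟨v, rfl⟩
  augSurj := by
    rintro ⟨v, hv⟩
    obtain ⟨w, rfl⟩ := R.ex0.ge hv
    exact ⟨w, rfl⟩
  ex0 := by rw [R.ex, LinearMap.ker_codRestrict]
  ex n := R.ex _
  bounded n hn := R.bounded _ (by lia)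

lemma projDimLT_of_finiteFreeResolution {M : Type u} [AddCommGroup M] [Module B M]
    (R : FiniteFreeResolution B M) : ProjDimLT B M (R.len + 1) := by
  induction hlen : R.len generalizing M with
  | zero =>
    have := R.bounded 0 hlen.le
    have : Subsingleton M := R.augSurj.subsingleton
    exact projDimLT_one.2 inferInstance
  | succ n ih =>
    have := R.free 0
    exact ProjDimLT.of_ker R.augSurj (ih (syzygyResolution R) (by simp [syzygyResolution, hlen]))

/-- The component of degree `n` of `F ⧸ W`, for a graded submodule `W`. -/
abbrev GradedFree.quotientComponent (F : GradedFree B) (W : Submodule B F) (n : ℤ) : Type u :=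
  F ⧸ W.comap (F.proj n)

lemma GradedFree.projDimLT_one_quotientComponent_bot (F : GradedFree B) (n : ℤ) :
    ProjDimLT B (F.quotientComponent ⊥ n) 1 := by
  have : Module.Projective B F := Module.Projective.of_basis F.basis
  let i : F.quotientComponent ⊥ n →ₗ[B] F := Submodule.liftQ _ (F.proj n) le_rfl
  refine projDimLT_one.2 (Module.Projective.of_split i (Submodule.mkQ _) ?_)
  ext v
  refine (Submodule.Quotient.eq _).2 ?_
  rw [Submodule.mem_comap, map_sub]
  exact sub_eq_zero.2 (F.proj_proj_self n v)

variable [IsLocalRing B] {R : LocalRegularSequence B}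

lemma LocalRegularSequence.exists_projDimLT_quotientComponent (R : LocalRegularSequence B)
    (F : GradedFree B) (n : ℤ) {j : ℕ} (hj : j ≤ R.length) :
    ∃ k, ProjDimLT B (F.quotientComponent (initialIdeal R.x j • ⊤) n) k := by
  induction j with
  | zero =>
    rw [initialIdeal_zero, Submodule.bot_smul]
    exact ⟨1, F.projDimLT_one_quotientComponent_bot n⟩
  | succ j ih =>
    obtain ⟨k, hk⟩ := ih (by omega)
    refine ⟨k + 1, .quotient_right (f := R.x j • LinearMap.id) (g := LinearMap.id)
      ?_ ?_ Function.surjective_id hk (hk.mono k.le_succ)⟩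
    · refine le_antisymm (fun v hv => ?_) fun v hv => ?_
      · simpa using Submodule.smul_mem _ (R.x j) hv
      · refine (R.isRegularModulo j hj).of_basis F.basis _ ?_
        simpa using hv
    · rw [initialIdeal_succ]
      ext v
      simp only [Submodule.comap_id, Submodule.mem_comap, Submodule.mem_sup, LinearMap.mem_range,
        mem_sup_span_singleton_smul_top]
      constructor
      · rintro ⟨u, hu⟩
        refine ⟨_, ⟨u, rfl⟩, v - R.x j • u, ?_, by simp⟩
        simpa [F.proj_proj_self] using map_mem_smul_top (F.proj n) hu
      · rintro ⟨_, ⟨u, rfl⟩, z, hz, rfl⟩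
        exact ⟨F.proj n u, by simpa using hz⟩

namespace LiftedComplex

variable (S : LiftedComplex R)

/-- The component of degree `n` of the cokernel of `d : F ⧸ J F → F ⧸ J F`. -/
abbrev cokernelMod (J : Ideal B) (n : ℤ) : Type u :=
  S.F.quotientComponent (S.boundariesMod J) n

variable {S} {J : Ideal B}

namespace ConeDatum

variable (D : S.ConeDatum J)

lemma boundariesMod_comap_inl (hJ : IsRegularModulo J D.r B) :
    (D.cone.boundariesMod J).comap (LinearMap.inl B S.F S.F) = J • ⊤ := by
  ext a
  rw [Submodule.mem_comap, mem_boundariesMod]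
  constructor
  · rintro ⟨(w : S.F × S.F), hw⟩
    obtain ⟨hw₁, hw₂⟩ := mem_smul_top_prod.1 hw
    simp only [coneD_apply, Prod.fst_sub, Prod.snd_sub, LinearMap.inl_apply] at hw₁ hw₂
    refine hJ.of_basis S.F.basis _ ?_
    convert add_mem (sub_mem (Submodule.smul_mem _ D.r hw₁) (map_mem_smul_top S.d hw₂))
      (D.d_d_add_mem w.2) using 1
    simp only [map_sub, map_smul, smul_sub, smul_add, map_zero]
    abel
  · intro ha
    exact ⟨0, by simpa using map_mem_smul_top (LinearMap.inl B S.F S.F) ha⟩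

lemma mem_boundariesMod_of_snd {b : S.F}
    (hb : b ∈ S.boundariesMod (J ⊔ Ideal.span {D.r})) :
    ∃ a, ((a, b) : S.F × S.F) ∈ D.cone.boundariesMod J := by
  obtain ⟨w, hw⟩ := (S.mem_boundariesMod).1 hb
  obtain ⟨u, hu⟩ := mem_sup_span_singleton_smul_top.1 hw
  refine ⟨S.d u - D.T w, D.cone.mem_boundariesMod.2 ⟨((u, -w) : S.F × S.F), ?_⟩⟩
  rw [mem_smul_top_prod, coneD_apply]
  refine ⟨by simp [sub_eq_add_neg], ?_⟩
  convert hu using 1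
  simp only [Prod.snd_sub, map_neg]
  abel

lemma snd_mem_boundariesMod {v : S.F × S.F} (hv : v ∈ D.cone.boundariesMod J) :
    v.2 ∈ S.boundariesMod (J ⊔ Ideal.span {D.r}) := by
  obtain ⟨(w : S.F × S.F), hw⟩ := D.cone.mem_boundariesMod.1 hv
  refine S.mem_boundariesMod.2 ⟨-w.2, mem_sup_span_singleton_smul_top.2 ⟨w.1, ?_⟩⟩
  convert (mem_smul_top_prod.1 hw).2 using 1
  rw [coneD_apply, map_neg, Prod.snd_sub]
  module

lemma projDimLT_cokernelMod_cone (hJ : IsRegularModulo J D.r B)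
    {n : ℤ} {k : ℕ} (hF : ProjDimLT B (S.F.quotientComponent (J • ⊤) n) k)
    (h : ProjDimLT B (S.cokernelMod (J ⊔ Ideal.span {D.r}) (n + (1 - D.deg))) k) :
    ProjDimLT B (D.cone.cokernelMod J n) k := by
  refine .quotient_middle (f := LinearMap.inl B S.F S.F) (g := LinearMap.snd B S.F S.F) ?_ ?_
    Prod.snd_surjective hF h
  · rw [← D.boundariesMod_comap_inl hJ]
    ext a
    rw [Submodule.mem_comap, Submodule.mem_comap, Submodule.mem_comap, Submodule.mem_comap,
      GradedFree.proj_prodShift]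
    simp
  · refine le_antisymm (fun (v : S.F × S.F) hv => ?_) (sup_le ?_ fun (v : S.F × S.F) hv => ?_)
    · obtain ⟨a, ha⟩ := D.mem_boundariesMod_of_snd hv
      refine Submodule.mem_sup.2 ⟨(v.1 - a, 0), ⟨v.1 - a, rfl⟩, (a, v.2), ?_, by simp⟩
      have ha' := D.cone.proj_mem_boundariesMod n ha
      rw [GradedFree.proj_prodShift] at ha'
      rw [Submodule.mem_comap, GradedFree.proj_prodShift]
      simpa [GradedFree.proj_proj_self] using ha'
    · rintro _ ⟨a, rfl⟩
      rw [Submodule.mem_comap, Submodule.mem_comap]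
      simp
    · rw [Submodule.mem_comap, GradedFree.proj_prodShift] at hv
      exact D.snd_mem_boundariesMod hv

end ConeDatum

/-- Over `B` itself, the cokernels form a sequence of syzygies. -/
lemma exists_projective_cokernelMod_bot (hS : S.IsComplexMod ⊥) (hS' : S.IsExactMod ⊥)
    {n : ℤ} {k : ℕ}
    (h : ProjDimLT B (S.cokernelMod ⊥ n) (k + 1)) :
    ∃ m, Module.Projective B (S.cokernelMod ⊥ m) := by
  induction k generalizing n with
  | zero => exact ⟨n, projDimLT_one.1 h⟩
  | succ k ih =>
    refine ih (n := n - 1) (.quotient_left (f := S.d) (g := LinearMap.id)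
      (q := LinearMap.ker (S.F.proj n)) ?_ ?_ Function.surjective_id
      ((S.F.projDimLT_one_quotientComponent_bot n).mono (by omega)) h)
    · ext v
      rw [Submodule.mem_comap, Submodule.mem_comap, LinearMap.mem_ker, S.proj_d,
        mem_boundariesMod]
      simp only [Submodule.bot_smul, Submodule.mem_bot, sub_eq_zero]
      refine ⟨?_, fun h => ?_⟩
      · rintro ⟨w, hw⟩
        simpa [hw] using hS w
      · simpa [sub_eq_zero] using hS' _ (by simpa using h)
    · ext v
      simp only [Submodule.mem_comap, LinearMap.id_apply, mem_boundariesMod, Submodule.bot_smul,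
        Submodule.mem_bot, sub_eq_zero, Submodule.mem_sup, LinearMap.mem_range, LinearMap.mem_ker]
      constructor
      · rintro ⟨w, hw⟩
        exact ⟨_, ⟨w, rfl⟩, v - S.d w, by simp [← hw, S.F.proj_proj_self], add_sub_cancel _ _⟩
      · rintro ⟨_, ⟨w, rfl⟩, z, hz, rfl⟩
        exact ⟨S.F.proj (n - 1) w, by rw [map_add, hz, add_zero, S.proj_d]⟩

end LiftedComplex

end ProjectiveDimension

section Vanishing

lemma exists_comp_comp_eq_self {k V W : Type*} [DivisionRing k] [AddCommGroup V] [Module k V]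
    [AddCommGroup W] [Module k W] (f : V →ₗ[k] W) : ∃ g : W →ₗ[k] V, f ∘ₗ g ∘ₗ f = f := by
  obtain ⟨s, hs⟩ := f.rangeRestrict.exists_rightInverse_of_surjective f.range_rangeRestrict
  obtain ⟨g, hg⟩ := s.exists_extend
  refine ⟨g, LinearMap.ext fun v => ?_⟩
  have hgv : g (f v) = s (f.rangeRestrict v) := LinearMap.congr_fun hg (f.rangeRestrict v)
  rw [LinearMap.comp_apply, LinearMap.comp_apply, hgv]
  exact congrArg Subtype.val (LinearMap.congr_fun hs (f.rangeRestrict v))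

variable {B : Type u} [CommRing B] [IsLocalRing B]

lemma exists_pseudoinverse_mod_maximalIdeal {F : Type*} [AddCommGroup F] [Module B F]
    [Module.Projective B F] (d : F →ₗ[B] F) :
    ∃ ρ : F →ₗ[B] F, ∀ v, d (ρ (d v)) - d v ∈ (maximalIdeal B • ⊤ : Submodule B F) := by
  let W : Submodule B F := maximalIdeal B • ⊤
  have hdW : W ≤ W.comap d := fun _ hv => map_mem_smul_top d hv
  let : Field (B ⧸ maximalIdeal B) := Ideal.Quotient.field _
  obtain ⟨g, hg⟩ := exists_comp_comp_eq_self
    ((W.mapQ W d hdW).extendScalarsOfSurjective (S := B ⧸ maximalIdeal B)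
      Ideal.Quotient.mk_surjective)
  obtain ⟨ρ, hρ⟩ := Module.projective_lifting_property W.mkQ
    (g.restrictScalars B ∘ₗ W.mkQ) W.mkQ_surjective
  refine ⟨ρ, fun v => (Submodule.Quotient.eq W).1 ?_⟩
  have hρ' : W.mkQ (ρ (d v)) = g (W.mkQ (d v)) := LinearMap.congr_fun hρ (d v)
  exact (congrArg (W.mapQ W d hdW) hρ').trans (LinearMap.congr_fun hg (W.mkQ v))

variable {R : LocalRegularSequence B}

namespace LiftedComplex

variable {S : LiftedComplex R} {J : Ideal B} {n : ℤ}

lemma component_eq_zero_iff :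
    S.component n = 0 ↔ ∀ z ∈ S.cycles, S.F.proj n z ∈ S.boundaries := by
  refine ⟨fun h z hz => ?_, fun h => LinearMap.ext fun a => ?_⟩
  · rw [← homologyClass_eq_zero (z := ⟨_, proj_mem_cycles n hz⟩),
      ← component_homologyClass n ⟨z, hz⟩, h, LinearMap.zero_apply]
  · obtain ⟨z, rfl⟩ := S.homologyClass_surjective a
    rw [component_homologyClass, LinearMap.zero_apply, homologyClass_eq_zero]
    exact h z z.2

/-- If `z` is a cycle then `d z ∈ 𝔪 F`, so that `κ (d z)` is, modulo `J F`, the boundary of an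
element of `𝔪 F`. -/
lemma component_eq_zero_of_retraction (hJ : J ≤ maximalIdeal B) (hS : S.IsExactMod J)
    {κ : S.F →ₗ[B] S.F} (hκ : ∀ v, κ v ∈ S.boundariesMod J)
    (hκd : ∀ w, κ (S.d w) - S.d (S.F.proj n w) ∈ (J • ⊤ : Submodule B S.F)) :
    S.component n = 0 := by
  refine component_eq_zero_iff.2 fun z hz => ?_
  have hκz : κ (S.d z) ∈ maximalIdeal B • S.boundariesMod J := by
    have h : κ (S.d z) ∈ S.mF.map κ := Submodule.mem_map_of_mem hz
    rw [Submodule.map_smul''] at h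
    refine Submodule.smul_mono le_rfl ?_ h
    rintro _ ⟨v, -, rfl⟩
    exact hκ v
  rw [boundariesMod, Submodule.smul_sup, LinearMap.range_eq_map, ← Submodule.map_smul'',
    Submodule.mem_sup] at hκz
  obtain ⟨_, ⟨y, hy, rfl⟩, u, hu, huy⟩ := hκz
  obtain ⟨w, hw⟩ := hS (S.F.proj n z - y) (by
    convert sub_mem (Submodule.smul_le_right hu) (hκd z) using 1
    rw [← huy, map_sub]
    abel)
  refine mem_boundaries.2 ⟨w, ?_⟩
  convert add_mem (Submodule.smul_mono_left hJ hw) hy using 1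
  abel

variable (S J n) in
/-- The projection of `F` onto the `n`-th cokernel of `F ⧸ J F`. -/
noncomputable def cokernelMkQ : S.F →ₗ[B] S.cokernelMod J n :=
  ((S.boundariesMod J).comap (S.F.proj n)).mkQ

lemma cokernelMkQ_surjective : Function.Surjective (S.cokernelMkQ J n) := Submodule.mkQ_surjective _

lemma cokernelMkQ_eq_zero {v : S.F} :
    S.cokernelMkQ J n v = 0 ↔ S.F.proj n v ∈ S.boundariesMod J :=
  Submodule.Quotient.mk_eq_zero _

lemma cokernelMkQ_proj (v : S.F) : S.cokernelMkQ J n (S.F.proj n v) = S.cokernelMkQ J n v := by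
  rw [← sub_eq_zero, ← map_sub, cokernelMkQ_eq_zero, map_sub, S.F.proj_proj_self, sub_self]
  exact zero_mem _

lemma cokernelMkQ_d (w : S.F) : S.cokernelMkQ J n (S.d w) = 0 :=
  cokernelMkQ_eq_zero.2 (S.proj_mem_boundariesMod n (S.d_mem_boundariesMod J w))

instance : Module.Finite B (S.cokernelMod J n) := by
  refine .of_surjective (S.cokernelMkQ J n ∘ₗ (LinearMap.range (S.F.proj n)).subtype) fun y => ?_
  obtain ⟨v, rfl⟩ := cokernelMkQ_surjective y
  exact ⟨⟨_, v, rfl⟩, cokernelMkQ_proj v⟩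

lemma component_eq_zero_of_projective (hS : S.IsExactMod ⊥)
    (h : Module.Projective B (S.cokernelMod ⊥ (n + 1))) : S.component n = 0 := by
  obtain ⟨σ, hσ⟩ := Module.projective_lifting_property (S.cokernelMkQ ⊥ (n + 1)) LinearMap.id
    cokernelMkQ_surjective
  refine component_eq_zero_of_retraction bot_le hS
    (κ := S.F.proj (n + 1) ∘ₗ (LinearMap.id - σ ∘ₗ S.cokernelMkQ ⊥ (n + 1))) (fun v => ?_)
    fun w => ?_
  · refine cokernelMkQ_eq_zero.1 ?_
    rw [LinearMap.sub_apply, map_sub, sub_eq_zero]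
    exact (LinearMap.congr_fun hσ _).symm
  · simp [cokernelMkQ_d, S.proj_d]

/-- The complex `F ⧸ J F` splits in degree `n`: the map induced by `d` on its `n`-th cokernel has
the left inverse induced by `τ`. -/
def IsSplitAt (S : LiftedComplex R) (J : Ideal B) (n : ℤ) : Prop :=
  ∃ τ : S.F →ₗ[B] S.F, ∀ v, S.F.proj n (v - τ (S.d v)) ∈ S.boundariesMod J

lemma IsSplitAt.component_sub_one_eq_zero (h : S.IsSplitAt J n) (hJ : J ≤ maximalIdeal B)
    (hS : S.IsComplexMod J) (hS' : S.IsExactMod J) : S.component (n - 1) = 0 := by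
  obtain ⟨τ, hτ⟩ := h
  refine component_eq_zero_of_retraction hJ hS' (κ := S.F.proj n ∘ₗ (LinearMap.id - τ ∘ₗ S.d))
    (fun v => by simpa using hτ v) fun w => ?_
  rw [LinearMap.comp_apply, LinearMap.sub_apply, LinearMap.id_apply, map_sub, S.proj_d,
    sub_sub_cancel_left]
  exact neg_mem (map_mem_smul_top (S.F.proj n ∘ₗ τ) (hS w))

lemma IsSplitAt.component_add_one_eq_zero (h : S.IsSplitAt J n) (hJ : J ≤ maximalIdeal B)
    (hS : S.IsComplexMod J) (hS' : S.IsDualExactMod J) : S.component (n + 1) = 0 := by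
  obtain ⟨τ, hτ⟩ := h
  have : Module.Projective B S.F := Module.Projective.of_basis S.F.basis
  obtain ⟨ρ, hρ⟩ := exists_pseudoinverse_mod_maximalIdeal S.d
  refine component_eq_zero_iff.2 fun z hz => mem_boundaries.2 ⟨ρ (S.F.proj (n + 1) z), ?_⟩
  refine (basis_mem_smul_top S.F.basis).2 fun i => ?_
  let φ : S.F →ₗ[B] B := S.F.basis.coord i ∘ₗ (LinearMap.id - S.d ∘ₗ ρ)
  have hφd (v : S.F) : φ (S.d v) ∈ maximalIdeal B := by
    simpa [φ] using neg_mem ((basis_mem_smul_top S.F.basis).1 (hρ v) i)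
  have hφJ (v : S.F) (hv : v ∈ S.boundariesMod J) : φ (S.d v) ∈ J := by
    obtain ⟨w, hw⟩ := mem_boundariesMod.1 hv
    refine mem_smul_top_self.1 ?_
    simpa using add_mem (map_mem_smul_top (φ ∘ₗ S.d) hw) (map_mem_smul_top φ (hS w))
  let φ' : S.F →ₗ[B] B := φ ∘ₗ S.F.proj (n + 1) ∘ₗ (LinearMap.id - S.d ∘ₗ τ)
  obtain ⟨ψ, hψ⟩ := hS' φ' fun v => by
    simpa [φ', S.proj_d] using hφJ _ (hτ v)
  have hφz : φ (S.F.proj (n + 1) z) - φ (S.d (S.F.proj n (τ z))) - ψ (S.d z) ∈ J := by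
    simpa [φ', S.proj_d] using hψ z
  change φ (S.F.proj (n + 1) z) ∈ maximalIdeal B
  rw [← sub_add_cancel (φ (S.F.proj (n + 1) z)) (φ (S.d (S.F.proj n (τ z)))),
    ← sub_add_cancel (_ - _) (ψ (S.d z))]
  exact add_mem (add_mem (hJ hφz) (mem_smul_top_self.1 (map_mem_smul_top ψ hz))) (hφd _)

/-- The endomorphism of the `n`-th cokernel of `F ⧸ J F` induced by `ρ ∘ d`. -/
noncomputable def cokernelEnd (hS : S.IsComplexMod J) (ρ : S.F →ₗ[B] S.F) :
    S.cokernelMod J n →ₗ[B] S.cokernelMod J n :=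
  Submodule.liftQ _ (S.cokernelMkQ J n ∘ₗ ρ ∘ₗ S.d ∘ₗ S.F.proj n) fun v hv => by
    obtain ⟨w, hw⟩ := mem_boundariesMod.1 hv
    refine cokernelMkQ_eq_zero.2 (S.smul_top_le_boundariesMod J ?_)
    simpa using map_mem_smul_top (S.F.proj n ∘ₗ ρ)
      (add_mem (map_mem_smul_top S.d hw) (hS w))

lemma cokernelEnd_cokernelMkQ (hS : S.IsComplexMod J) (ρ : S.F →ₗ[B] S.F) (v : S.F) :
    cokernelEnd (n := n) hS ρ (S.cokernelMkQ J n v) =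
      S.cokernelMkQ J n (ρ (S.d (S.F.proj n v))) := rfl

/-- By Nakayama's lemma it suffices to check surjectivity modulo the maximal ideal, where
`v - ρ (d v)` is a cycle, hence a boundary. -/
lemma cokernelEnd_surjective (hS : S.IsComplexMod J) (h : S.component n = 0) {ρ : S.F →ₗ[B] S.F}
    (hρ : ∀ v, S.d (ρ (S.d v)) - S.d v ∈ S.mF) :
    Function.Surjective (cokernelEnd (n := n) hS ρ) := by
  rw [← LinearMap.range_eq_top, eq_top_iff]
  refine Submodule.le_of_le_smul_of_le_jacobson_bot (I := maximalIdeal B) Module.Finite.fg_top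
    (maximalIdeal_le_jacobson _) fun y _ => ?_
  obtain ⟨v, rfl⟩ := cokernelMkQ_surjective y
  let u := S.F.proj n v - ρ (S.d (S.F.proj n v))
  have hu : S.F.proj n u ∈ S.boundaries := by
    refine component_eq_zero_iff.1 h u (Submodule.mem_comap.2 ?_)
    rw [map_sub, ← neg_sub]
    exact neg_mem (hρ _)
  obtain ⟨w, hw⟩ := mem_boundaries.1 hu
  have hw' := map_mem_smul_top (S.cokernelMkQ J n) hw
  rw [map_sub, cokernelMkQ_d, sub_zero, cokernelMkQ_proj, map_sub, cokernelMkQ_proj] at hw'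
  exact Submodule.mem_sup.2 ⟨_, ⟨S.cokernelMkQ J n v, rfl⟩, _, hw',
    by rw [cokernelEnd_cokernelMkQ, add_sub_cancel]⟩

lemma isSplitAt_of_component_eq_zero (hS : S.IsComplexMod J) (h : S.component n = 0) :
    S.IsSplitAt J n := by
  have : Module.Projective B S.F := Module.Projective.of_basis S.F.basis
  obtain ⟨ρ, hρ⟩ := exists_pseudoinverse_mod_maximalIdeal S.d
  let e := LinearEquiv.ofBijective (cokernelEnd (n := n) hS ρ)
    (OrzechProperty.bijective_of_surjective_endomorphism _ (cokernelEnd_surjective hS h hρ))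
  obtain ⟨τ, hτ⟩ := Module.projective_lifting_property (S.cokernelMkQ J n)
    (e.symm.toLinearMap ∘ₗ S.cokernelMkQ J n) cokernelMkQ_surjective
  refine ⟨τ ∘ₗ ρ ∘ₗ S.F.proj (n + 1), fun v => cokernelMkQ_eq_zero.1 ?_⟩
  have hv : e (S.cokernelMkQ J n v) = S.cokernelMkQ J n (ρ (S.F.proj (n + 1) (S.d v))) := by
    rw [← S.isHomogeneous_d]
    rfl
  rw [map_sub, sub_eq_zero, ← LinearEquiv.symm_apply_apply e (S.cokernelMkQ J n v), hv]
  exact (LinearMap.congr_fun hτ _).symm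

/-- Vanishing spreads downwards along exactness and upwards along dual exactness. -/
lemma forall_component_eq_zero (hJ : J ≤ maximalIdeal B) (hS : S.IsComplexMod J)
    (hS' : S.IsExactMod J) (hS'' : S.IsDualExactMod J) (h : S.component n = 0) (m : ℤ) :
    S.component m = 0 := by
  refine Int.inductionOn' m n h (fun k _ ih => ?_) fun k _ ih => ?_
  · exact (isSplitAt_of_component_eq_zero hS ih).component_add_one_eq_zero hJ hS hS''
  · exact (isSplitAt_of_component_eq_zero hS ih).component_sub_one_eq_zero hJ hS hS'

end LiftedComplex

end Vanishing

section RegularOperator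

lemma pow_add_pow_notMem_prime {R : Type*} [CommRing R] {p : Ideal R} (hp : p.IsPrime) {x y : R}
    (hx : x ∈ p) (hy : y ∉ p) {a : ℕ} (ha : a ≠ 0) (b : ℕ) : x ^ a + y ^ b ∉ p := fun h =>
  hy (hp.mem_of_pow_mem b
    ((p.add_mem_iff_right (p.pow_mem_of_mem hx a (Nat.pos_of_ne_zero ha))).1 h))

lemma exists_mem_forall_notMem_of_forall_erase {R : Type*} [CommRing R] {H : Subsemigroup R}
    (hadd : ∀ f ∈ H, ∀ g ∈ H, ∃ a b, a ≠ 0 ∧ b ≠ 0 ∧ f ^ a + g ^ b ∈ H) {Q : Finset (Ideal R)}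
    (hQ : ∀ p ∈ Q, p.IsPrime) (hQ' : Q.Nontrivial) {z : Ideal R → R} (hzH : ∀ p ∈ Q, z p ∈ H)
    (hz : ∀ p ∈ Q, ∀ q ∈ Q, q ≠ p → z p ∉ q) (hzp : ∀ p ∈ Q, z p ∈ p) :
    ∃ f ∈ H, ∀ p ∈ Q, f ∉ p := by
  classical
  obtain ⟨p, hp⟩ := hQ'.nonempty
  let y := ∏ q ∈ Q.erase p, z q
  have hyH : y ∈ H := Finset.prod_induction_nonempty z (· ∈ H) (fun _ _ => H.mul_mem)
    ((Finset.erase_nonempty hp).2 hQ') fun q hq => hzH q (Finset.mem_of_mem_erase hq)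
  have hyp : y ∉ p := by
    have := hQ p hp
    rw [Ideal.IsPrime.prod_mem_iff]
    rintro ⟨q, hq, hqp⟩
    rw [Finset.mem_erase] at hq
    exact hz q hq.2 p hp hq.1.symm hqp
  obtain ⟨a, b, ha, hb, hab⟩ := hadd _ (hzH p hp) _ hyH
  refine ⟨_, hab, fun q hq => ?_⟩
  rcases eq_or_ne q p with rfl | hqp
  · exact pow_add_pow_notMem_prime (hQ q hq) (hzp q hq) hyp ha b
  · have hyq : y ∈ q :=
      Ideal.mem_of_dvd q (Finset.dvd_prod_of_mem z (Finset.mem_erase.2 ⟨hqp, hq⟩)) (hzp q hq)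
    exact add_comm (y ^ b) _ ▸ pow_add_pow_notMem_prime (hQ q hq) hyq (hz p hp q hq hqp) hb a

/-- Prime avoidance in which sums are formed only after raising the summands to powers, which can
bring them into the same degree. -/
lemma exists_mem_forall_notMem_prime {R : Type*} [CommRing R] {H : Subsemigroup R}
    (hH : ∃ f, f ∈ H)
    (hadd : ∀ f ∈ H, ∀ g ∈ H, ∃ a b, a ≠ 0 ∧ b ≠ 0 ∧ f ^ a + g ^ b ∈ H) (Q : Finset (Ideal R))
    (hQ : ∀ p ∈ Q, p.IsPrime) (hHQ : ∀ p ∈ Q, ∃ f ∈ H, f ∉ p) :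
    ∃ f ∈ H, ∀ p ∈ Q, f ∉ p := by
  classical
  induction Q using Finset.strongInduction with
  | _ Q ih =>
  rcases Q.eq_empty_or_nonempty with rfl | ⟨p, hp⟩
  · simpa using hH
  rcases Finset.eq_singleton_or_nontrivial hp with rfl | hQ'
  · simpa using hHQ p hp
  have hz (q) (hq : q ∈ Q) : ∃ z ∈ H, ∀ q' ∈ Q.erase q, z ∉ q' :=
    ih _ (Finset.erase_ssubset hq) (fun q' h => hQ q' (Finset.mem_of_mem_erase h))
      fun q' h => hHQ q' (Finset.mem_of_mem_erase h)
  choose! z hzH hz using hz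
  replace hz (q) (hq : q ∈ Q) (q') (hq' : q' ∈ Q) (h : q' ≠ q) : z q ∉ q' :=
    hz q hq q' (Finset.mem_erase.2 ⟨h, hq'⟩)
  by_cases hzq : ∀ q ∈ Q, z q ∈ q
  · exact exists_mem_forall_notMem_of_forall_erase hadd hQ hQ' hzH hz hzq
  · push Not at hzq
    obtain ⟨q, hq, hzq⟩ := hzq
    refine ⟨z q, hzH q hq, fun q' hq' => ?_⟩
    rcases eq_or_ne q' q with rfl | h
    · exact hzq
    · exact hz q hq q' hq' h

variable {B : Type u} [CommRing B] [IsLocalRing B] {R : LocalRegularSequence B}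

namespace LiftedComplex

variable {S : LiftedComplex R}

/-- A polynomial in the Eisenbud operators is liftable in degree `s` if it acts on homology as a
chain map of degree `s`, and hence has a mapping cone. -/
def IsLiftable (S : LiftedComplex R) (s : ℕ) (f : R.Operators) : Prop :=
  ∃ T : S.F →ₗ[B] S.F, GradedFree.IsHomogeneous s T ∧ ∃ h : IsChainMap 1 T, ∀ a, f • a = h.map a

namespace IsLiftable

variable {f g : R.Operators} {s t : ℕ}

lemma zero : S.IsLiftable s 0 := by
  have h : IsChainMap 1 (0 : S.F →ₗ[B] S.F) := fun v => by simp
  refine ⟨0, .zero s, h, fun a => ?_⟩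
  obtain ⟨z, rfl⟩ := S.homologyClass_surjective a
  rw [zero_smul]
  exact (map_zero S.homologyClass).symm

lemma X (i : Fin R.length) : S.IsLiftable 2 (MvPolynomial.X i) :=
  ⟨S.χ i, S.isHomogeneous_χ i, S.isChainMap_χ i.2, S.X_smul S.isEisenbudSystem_χ i⟩

lemma add (hf : S.IsLiftable s f) (hg : S.IsLiftable s g) : S.IsLiftable s (f + g) := by
  obtain ⟨T, hT, hT', hf⟩ := hf
  obtain ⟨U, hU, hU', hg⟩ := hg
  refine ⟨T + U, hT.add hU, hT'.add hU', fun a => ?_⟩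
  obtain ⟨z, rfl⟩ := S.homologyClass_surjective a
  rw [add_smul, hf, hg]
  simp only [IsChainMap.map_homologyClass, ← map_add]
  rfl

lemma mul (hf : S.IsLiftable s f) (hg : S.IsLiftable t g) : S.IsLiftable (s + t) (f * g) := by
  obtain ⟨T, hT, hT', hf⟩ := hf
  obtain ⟨U, hU, hU', hg⟩ := hg
  refine ⟨T ∘ₗ U, ?_, hT'.comp hU', fun a => ?_⟩
  · rw [add_comm, Nat.cast_add]
    exact hT.comp hU
  · obtain ⟨z, rfl⟩ := S.homologyClass_surjective a
    rw [mul_smul, hg, hf]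
    rfl

lemma pow (hf : S.IsLiftable s f) {k : ℕ} (hk : k ≠ 0) : S.IsLiftable (k * s) (f ^ k) := by
  induction k, Nat.one_le_iff_ne_zero.2 hk using Nat.le_induction with
  | base => simpa using hf
  | succ k hk ih =>
    rw [pow_succ, add_mul, one_mul]
    exact (ih (by omega)).mul hf

end IsLiftable

variable (S) in
/-- The polynomials which are liftable in some positive degree. -/
def liftableOperators : Subsemigroup R.Operators where
  carrier := {f | ∃ s, s ≠ 0 ∧ S.IsLiftable s f}
  mul_mem' := fun ⟨_, hs, hf⟩ ⟨_, _, hg⟩ =>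
    ⟨_, by simp [hs], hf.mul hg⟩

lemma exists_pow_add_pow_mem_liftableOperators {f g : R.Operators}
    (hf : f ∈ S.liftableOperators) (hg : g ∈ S.liftableOperators) :
    ∃ a b, a ≠ 0 ∧ b ≠ 0 ∧ f ^ a + g ^ b ∈ S.liftableOperators := by
  obtain ⟨s, hs, hf⟩ := hf
  obtain ⟨t, ht, hg⟩ := hg
  exact ⟨t, s, ht, hs, t * s, mul_ne_zero ht hs, (hf.pow ht).add (mul_comm s t ▸ hg.pow hs)⟩

variable (S) in
/-- The elements of the homology which all Eisenbud operators kill. -/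
def socle : Submodule R.Operators S.Homology where
  carrier := {a | ∀ i, (MvPolynomial.X i : R.Operators) • a = 0}
  zero_mem' _ := smul_zero _
  add_mem' ha hb i := by rw [smul_add, ha i, hb i, add_zero]
  smul_mem' p a ha i := by rw [smul_comm, ha i, smul_zero]

lemma eq_zero_of_forall_component_eq_zero {a : S.Homology} (h : ∀ n, S.component n a = 0) :
    a = 0 := by
  obtain ⟨s, hs⟩ := S.exists_eq_sum_component a
  rw [hs s subset_rfl, Finset.sum_eq_zero fun n _ => h n]

lemma eventually_component_eq_zero (a : S.Homology) : ∀ᶠ n in atTop, S.component n a = 0 := by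
  obtain ⟨s, hs⟩ := S.exists_eq_sum_component a
  obtain ⟨N, hN⟩ := s.bddAbove
  filter_upwards [eventually_gt_atTop N] with n hn
  rw [hs s subset_rfl, map_sum]
  refine Finset.sum_eq_zero fun k hk => S.component_component_of_ne ?_ a
  exact ((hN hk).trans_lt hn).ne'

lemma smul_eq_constantCoeff_smul {a : S.Homology} (ha : a ∈ S.socle) (p : R.Operators) :
    p • a = MvPolynomial.constantCoeff p • a := by
  induction p using MvPolynomial.induction_on with
  | C r => rw [← MvPolynomial.algebraMap_eq, algebraMap_smul, MvPolynomial.algebraMap_eq,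
      MvPolynomial.constantCoeff_C]
  | add p q hp hq => rw [add_smul, hp, hq, map_add, add_smul]
  | mul_X p i => rw [mul_smul, ha i, smul_zero, map_mul, MvPolynomial.constantCoeff_X, mul_zero,
      zero_smul]

lemma exists_truncation_inf_socle_eq_bot [IsNoetherianRing B] (h : S.FGTruncations) :
    ∃ n, S.truncation n ⊓ S.socle = ⊥ := by
  obtain ⟨T, hT⟩ := fg_of_le (N := S.truncation 0 ⊓ S.socle) inf_le_left (h 0)
  obtain ⟨n, hn⟩ := eventually_atTop.1
    ((eventually_all_finset T).2 fun a _ => eventually_component_eq_zero a)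
  refine ⟨max n 0, (Submodule.eq_bot_iff _).2 fun a ⟨ha, ha'⟩ =>
    eq_zero_of_forall_component_eq_zero fun m => ?_⟩
  rcases lt_or_ge m (max n 0) with hm | hm
  · exact ha m hm
  have hspan (b) (hb : b ∈ Submodule.span R.Operators (T : Set S.Homology)) :
      S.component m b = 0 := by
    induction hb using Submodule.span_induction with
    | mem t ht => exact hn m ((le_max_left _ _).trans hm) t ht
    | zero => exact map_zero _
    | add a b _ _ ha hb => rw [map_add, ha, hb, add_zero]
    | smul p a ha ih =>
      rw [hT] at ha
      rw [smul_eq_constantCoeff_smul ha.2, map_smul, ih, smul_zero]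
  exact hspan a (hT ▸ ⟨fun k hk => ha k (hk.trans_le (le_max_right _ _)), ha'⟩)

lemma exists_X_notMem_of_mem_associatedPrimes [IsNoetherianRing B] {n : ℤ}
    (hn : S.truncation n ⊓ S.socle = ⊥)
    {p : Ideal R.Operators} (hp : p ∈ associatedPrimes R.Operators (S.truncation n)) :
    ∃ i, MvPolynomial.X i ∉ p := by
  by_contra! hX
  obtain ⟨hprime, a, ha⟩ := isAssociatedPrime_iff.1 hp
  have hsocle : (a : S.Homology) ∈ S.socle := fun i => by
    have hi := hX i
    rw [ha, Submodule.mem_colon_singleton, Submodule.mem_bot] at hi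
    exact congrArg Subtype.val hi
  have ha0 : a = 0 :=
    Subtype.ext ((Submodule.eq_bot_iff _).1 hn _ (Submodule.mem_inf.2 ⟨a.2, hsocle⟩))
  exact hprime.ne_top ((Ideal.eq_top_iff_one _).2 (by simp [ha, ha0]))

lemma exists_isLiftable_injOn_truncation [IsNoetherianRing B] (h : S.FGTruncations) :
    ∃ s f n, s ≠ 0 ∧ S.IsLiftable s f ∧ ∀ a ∈ S.truncation n, f • a = 0 → a = 0 := by
  obtain ⟨n, hn⟩ := exists_truncation_inf_socle_eq_bot h
  have : IsNoetherian R.Operators (S.truncation n) :=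
    isNoetherian_of_fg_of_noetherian _ (h n)
  have hfin := associatedPrimes.finite R.Operators (S.truncation n)
  obtain ⟨f, ⟨s, hs, hf⟩, hfp⟩ := exists_mem_forall_notMem_prime (H := S.liftableOperators)
    ⟨0, 1, one_ne_zero, .zero⟩ (fun _ hf _ hg => exists_pow_add_pow_mem_liftableOperators hf hg)
    hfin.toFinset (fun p hp => (hfin.mem_toFinset.1 hp).isPrime) fun p hp =>
      have ⟨i, hi⟩ := exists_X_notMem_of_mem_associatedPrimes hn (hfin.mem_toFinset.1 hp)
      ⟨MvPolynomial.X i, ⟨2, two_ne_zero, .X i⟩, hi⟩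
  refine ⟨s, f, n, hs, hf, fun a ha hfa => ?_⟩
  by_contra hne
  have hzero : f ∈ {r : R.Operators | ∃ y : S.truncation n, y ≠ 0 ∧ r • y = 0} :=
    ⟨⟨a, ha⟩, fun h => hne (congrArg Subtype.val h), Subtype.ext hfa⟩
  rw [← biUnion_associatedPrimes_eq_zero_divisors] at hzero
  obtain ⟨p, hp, hfp'⟩ := Set.mem_iUnion₂.1 hzero
  exact hfp p (hfin.mem_toFinset.2 hp) hfp'

end LiftedComplex

end RegularOperator

section FiniteProjectiveDimension

variable {B : Type u} [CommRing B] [IsLocalRing B] {R : LocalRegularSequence B}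

namespace LiftedComplex

variable {S : LiftedComplex R}

lemma eq_zero_of_projDimLT {n : ℤ} {k : ℕ} (hS : S.IsComplexMod ⊥) (hS' : S.IsExactMod ⊥)
    (hS'' : S.IsDualExactMod ⊥) (h : ProjDimLT B (S.cokernelMod ⊥ n) k) (a : S.Homology) :
    a = 0 := by
  obtain ⟨m, hm⟩ := exists_projective_cokernelMod_bot hS hS' (h.mono (Nat.le_succ k))
  rw [← sub_add_cancel m 1] at hm
  have hzero := forall_component_eq_zero bot_le hS hS' hS'' (component_eq_zero_of_projective hS' hm)
  exact eq_zero_of_forall_component_eq_zero fun i => by rw [hzero i, LinearMap.zero_apply]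

theorem fgTruncations_of_projDimLT [IsNoetherianRing B] {j : ℕ} (hj : j ≤ R.length)
    (hS : S.IsComplexMod (initialIdeal R.x j)) (hS' : S.IsExactMod (initialIdeal R.x j))
    (hS'' : S.IsDualExactMod (initialIdeal R.x j)) {n : ℤ} {k : ℕ}
    (h : ProjDimLT B (S.cokernelMod (initialIdeal R.x j) n) k) : S.FGTruncations := by
  induction j generalizing S n k with
  | zero =>
    rw [initialIdeal_zero] at hS hS' hS'' h
    intro m
    rw [(Submodule.eq_bot_iff (S.truncation m)).2 fun a _ => eq_zero_of_projDimLT hS hS' hS'' h a]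
    exact Submodule.fg_bot
  | succ j ih =>
    obtain ⟨D, hDr, hDdeg, hDT⟩ := exists_eliminationCone hj hS
    have hr : IsRegularModulo (initialIdeal R.x j) D.r B := fun v hv =>
      R.isRegularModulo j hj v (by simpa [hDr] using hv)
    have hideal : initialIdeal R.x (j + 1) = initialIdeal R.x j ⊔ Ideal.span {D.r} := by
      rw [initialIdeal_succ, hDr, Ideal.span_singleton_neg]
    rw [hideal] at hS' hS'' h
    obtain ⟨k', hk'⟩ := R.exists_projDimLT_quotientComponent S.F (n + 1) (Nat.le_of_lt hj)
    refine D.fgTruncations_of_cone hDT (by omega) (ih (S := D.cone) (Nat.le_of_lt hj)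
      D.isComplexMod_cone (D.isExactMod_cone hS' fun a _ ha => ⟨0, ?_, by simp⟩)
      (D.isDualExactMod_cone hS'' fun φ _ hφ => ⟨0, fun v => ?_, by simp⟩)
      (D.projDimLT_cokernelMod_cone hr (hk'.mono (le_max_right k k')) ?_))
    · simpa using hr.of_basis S.F.basis _ ha
    · simpa using mem_smul_top_self.1 (hr _ (mem_smul_top_self.2 (hφ v)))
    · rw [hDdeg, show n + 1 + (1 - 2) = n by ring]
      exact h.mono (le_max_left k k')

/-- The mapping cone of a chain map of positive degree, over `B ⧸ R.ideal`. -/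
def mappingCone {T : S.F →ₗ[B] S.F} {s : ℕ} (hT : GradedFree.IsHomogeneous s T)
    (h : IsChainMap 1 T) : S.ConeDatum R.ideal where
  T := T
  r := 0
  deg := s
  le_ideal := le_rfl
  r_mem := zero_mem _
  isHomogeneous_T := hT
  isHomogeneous_r := by simpa using GradedFree.IsHomogeneous.zero _
  d_T_sub_mem v := by simpa using h v
  d_d_add_mem v := by simpa using S.d_d_mem v

section MappingCone

variable {T : S.F →ₗ[B] S.F} {s : ℕ} (hT : GradedFree.IsHomogeneous s T) (h : IsChainMap 1 T)

lemma isExactMod_mappingCone (hS : S.IsExactMod R.ideal) :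
    (mappingCone hT h).cone.IsExactMod R.ideal := by
  refine (mappingCone hT h).isExactMod_cone (by simpa [mappingCone] using hS) fun a ha _ => ?_
  obtain ⟨w, hw⟩ := hS a ha
  exact ⟨w, hw, by simp [mappingCone]⟩

lemma isDualExactMod_mappingCone (hS : S.IsDualExactMod R.ideal) :
    (mappingCone hT h).cone.IsDualExactMod R.ideal := by
  refine (mappingCone hT h).isDualExactMod_cone (by simpa [mappingCone] using hS) fun φ hφ _ => ?_
  obtain ⟨ψ, hψ⟩ := hS φ hφ
  exact ⟨ψ, hψ, by simp [mappingCone]⟩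

end MappingCone

end LiftedComplex

end FiniteProjectiveDimension

section Length

lemma length_le_add_of_exact {B M N P : Type*} [Ring B] [AddCommGroup M] [Module B M]
    [AddCommGroup N] [Module B N] [AddCommGroup P] [Module B P] {f : M →ₗ[B] N} {g : N →ₗ[B] P}
    (h : Function.Exact f g) : Module.length B N ≤ Module.length B M + Module.length B P := by
  rw [Module.length_eq_add_of_exact (LinearMap.range f).subtype g.rangeRestrict
    (Submodule.subtype_injective _) g.surjective_rangeRestrict
    (LinearMap.exact_iff.2 (by simpa using h.linearMap_ker_eq))]
  exact add_le_add (Module.length_le_of_surjective _ f.surjective_rangeRestrict)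
    (Module.length_le_of_injective _ (LinearMap.range g).subtype_injective)

lemma length_ne_top_of_smul_eq_zero {B M : Type*} [CommRing B] [IsLocalRing B] [AddCommGroup M]
    [Module B M] [Module.Finite B M] (h : ∀ r ∈ maximalIdeal B, ∀ a : M, r • a = 0) :
    Module.length B M ≠ ⊤ := by
  have htorsion : Module.IsTorsionBySet B M (maximalIdeal B : Set B) := fun a r => h r.1 r.2 a
  let : Module (B ⧸ maximalIdeal B) M := htorsion.module
  have : IsScalarTower B (B ⧸ maximalIdeal B) M := htorsion.isScalarTower
  let : Field (B ⧸ maximalIdeal B) := Ideal.Quotient.field _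
  have : Module.Finite (B ⧸ maximalIdeal B) M := Module.Finite.of_restrictScalars_finite B _ _
  rw [Module.length_eq_of_surjective (R := B ⧸ maximalIdeal B) Ideal.Quotient.mk_surjective]
  exact Module.length_ne_top

end Length

section Betti

variable {B : Type u} [CommRing B] [IsLocalRing B] {R : LocalRegularSequence B}

namespace LiftedComplex

variable {S S' S'' : LiftedComplex R} {m n p : ℤ}

/-- The restriction to homology in degree `n` of a homogeneous map on homology. -/
noncomputable def componentMap (f : S.Homology →ₗ[R.Operators] S'.Homology)
    (hf : ∀ a, f (S.component n a) = S'.component m (f a)) :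
    LinearMap.range (S.component n) →ₗ[B] LinearMap.range (S'.component m) :=
  (f.restrictScalars B).restrict (by
    rintro _ ⟨a, rfl⟩
    exact ⟨f a, (hf a).symm⟩)

lemma exact_componentMap {f : S.Homology →ₗ[R.Operators] S'.Homology}
    {g : S'.Homology →ₗ[R.Operators] S''.Homology}
    (hf : ∀ a, f (S.component n a) = S'.component m (f a))
    (hg : ∀ a, g (S'.component m a) = S''.component p (g a)) (h : Function.Exact f g) :
    Function.Exact (componentMap f hf) (componentMap g hg) := by
  rintro ⟨_, b, rfl⟩
  rw [Subtype.ext_iff]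
  refine (h (S'.component m b)).trans ⟨?_, ?_⟩
  · rintro ⟨a, ha⟩
    refine ⟨⟨_, a, rfl⟩, Subtype.ext ?_⟩
    exact (hf a).trans (by rw [ha, component_component_self])
  · rintro ⟨a, ha⟩
    exact ⟨a, congrArg Subtype.val ha⟩

variable (S) in
/-- The dimension over the residue field of the homology in degree `n` of `F ⧸ 𝔪 F`. -/
noncomputable def betti (n : ℤ) : ℕ :=
  (Module.length B (LinearMap.range (S.component n))).toNat

lemma smul_homology_eq_zero {r : B} (hr : r ∈ maximalIdeal B) (a : S.Homology) : r • a = 0 := by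
  obtain ⟨z, rfl⟩ := S.homologyClass_surjective a
  rw [← map_smul, homologyClass_eq_zero]
  exact S.smul_top_le_boundariesMod _ (Submodule.smul_mem_smul hr trivial)

variable [IsNoetherianRing B]

lemma coe_betti (n : ℤ) :
    (S.betti n : ℕ∞) = Module.length B (LinearMap.range (S.component n)) :=
  ENat.natCast_toNat <| length_ne_top_of_smul_eq_zero fun _ hr a =>
    Subtype.ext (smul_homology_eq_zero hr (a : S.Homology))

lemma betti_eq_zero_iff : S.betti n = 0 ↔ S.component n = 0 := by
  rw [← ENat.natCast_inj, coe_betti, ENat.natCast_zero, Module.length_eq_zero_iff,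
    Submodule.subsingleton_iff_eq_bot, LinearMap.range_eq_bot]

namespace ConeDatum

variable {J : Ideal B} (D : S.ConeDatum J)

lemma betti_le (n : ℤ) : S.betti n ≤ D.cone.betti (n + (D.deg - 1)) + S.betti (n + D.deg) := by
  have hsnd (c : D.cone.Homology) : D.homologySnd (D.cone.component (n + (D.deg - 1)) c) =
      S.component n (D.homologySnd c) := by
    rw [homologySnd_component]
    congr 2
    ring
  rw [← Nat.cast_le (α := ℕ∞), Nat.cast_add, coe_betti, coe_betti, coe_betti]
  exact length_le_add_of_exact
    (exact_componentMap hsnd (D.homologyT_component n) D.exact_homologySnd_homologyT)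

lemma betti_cone_add_eq {n : ℤ} (hT : ∀ m ≥ n, ∀ a, D.homologyT (S.component m a) = 0 →
      S.component m a = 0) :
    D.cone.betti (n + D.deg) + S.betti n = S.betti (n + D.deg) := by
  let t := componentMap D.homologyT (D.homologyT_component n)
  let i := componentMap D.homologyInl (D.homologyInl_component (n + D.deg))
  have ht : Function.Injective t := by
    rw [injective_iff_map_eq_zero]
    rintro ⟨_, a, rfl⟩ ha
    exact Subtype.ext (hT n le_rfl a (congrArg Subtype.val ha))
  have hi : Function.Surjective i := by
    have hsnd (c : D.cone.Homology) : D.homologySnd (D.cone.component (n + D.deg) c) =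
        S.component (n + 1) (D.homologySnd c) := by
      rw [homologySnd_component]
      congr 2
      ring
    rintro ⟨_, c, rfl⟩
    refine (exact_componentMap _ hsnd D.exact_homologyInl_homologySnd _).1 (Subtype.ext ?_)
    refine (hsnd c).trans (hT (n + 1) (by omega) _ ?_)
    rw [← hsnd]
    exact D.exact_homologySnd_homologyT.apply_apply_eq_zero _
  rw [← ENat.natCast_inj, Nat.cast_add, coe_betti, coe_betti, coe_betti, add_comm]
  exact (Module.length_eq_add_of_exact t i ht hi
    (exact_componentMap _ _ D.exact_homologyT_homologyInl)).symm

end ConeDatum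

end LiftedComplex

end Betti

section PolynomialGrowth

/-- The partial sums of `l` grow at most like a polynomial of degree `t`. This is the averaged form
of the bound `l n ≤ a * n ^ (t - 1)`; unlike the latter it behaves well under differences. -/
def SumGrowthLE (l : ℕ → ℕ) (t : ℕ) : Prop :=
  ∃ a, ∀ N, ∑ m ∈ Finset.range N, l m ≤ a * (N + 1) ^ t

lemma add_pow_le_mul_pow (c N t : ℕ) : (N + c + 1) ^ t ≤ (c + 1) ^ t * (N + 1) ^ t := by
  rw [← mul_pow]
  gcongr
  nlinarith

lemma sum_range_add_eq (l : ℕ → ℕ) (c N : ℕ) : ∑ m ∈ Finset.range (c + N), l m =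
    ∑ m ∈ Finset.range c, l m + ∑ m ∈ Finset.range N, l (m + c) := by
  simp only [Finset.sum_range_add, add_comm _ c]

lemma sum_range_comp_add_le (l : ℕ → ℕ) {c N M : ℕ} (h : c + N ≤ M) :
    ∑ m ∈ Finset.range N, l (m + c) ≤ ∑ m ∈ Finset.range M, l m :=
  calc ∑ m ∈ Finset.range N, l (m + c) ≤ ∑ m ∈ Finset.range (c + N), l m := by
        rw [sum_range_add_eq]
        exact le_add_self
    _ ≤ ∑ m ∈ Finset.range M, l m := Finset.sum_le_sum_of_subset (Finset.range_mono h)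

namespace SumGrowthLE

variable {l : ℕ → ℕ} {t : ℕ}

lemma of_le {a : ℕ} (h : ∀ m, l m ≤ a * (m + 1) ^ t) : SumGrowthLE l (t + 1) := by
  refine ⟨a, fun N => ?_⟩
  calc ∑ m ∈ Finset.range N, l m ≤ ∑ _m ∈ Finset.range N, a * (N + 1) ^ t := by
        refine Finset.sum_le_sum fun m hm => (h m).trans ?_
        gcongr
        exact (Finset.mem_range.1 hm).le
    _ = N * (a * (N + 1) ^ t) := by simp
    _ ≤ (N + 1) * (a * (N + 1) ^ t) := by gcongr; omega
    _ = a * (N + 1) ^ (t + 1) := by ring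

lemma comp_add (h : SumGrowthLE l t) (c : ℕ) : SumGrowthLE (fun m => l (m + c)) t := by
  obtain ⟨a, ha⟩ := h
  refine ⟨a * (c + 1) ^ t, fun N => ?_⟩
  calc ∑ m ∈ Finset.range N, l (m + c) ≤ ∑ m ∈ Finset.range (N + c), l m :=
        sum_range_comp_add_le l (add_comm c N).le
    _ ≤ a * (N + c + 1) ^ t := ha _
    _ ≤ a * (c + 1) ^ t * (N + 1) ^ t := by
        rw [mul_assoc]
        exact Nat.mul_le_mul_left a (add_pow_le_mul_pow c N t)

lemma of_comp_add {c : ℕ} (h : SumGrowthLE (fun m => l (m + c)) t) : SumGrowthLE l t := by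
  obtain ⟨a, ha⟩ := h
  refine ⟨∑ m ∈ Finset.range c, l m + a, fun N => ?_⟩
  calc ∑ m ∈ Finset.range N, l m ≤ ∑ m ∈ Finset.range (c + N), l m :=
        Finset.sum_le_sum_of_subset (Finset.range_mono (by omega))
    _ = ∑ m ∈ Finset.range c, l m + ∑ m ∈ Finset.range N, l (m + c) :=
        sum_range_add_eq l c N
    _ ≤ (∑ m ∈ Finset.range c, l m) * (N + 1) ^ t + a * (N + 1) ^ t :=
        add_le_add (Nat.le_mul_of_pos_right _ (by positivity)) (ha N)
    _ = _ := (add_mul _ _ _).symm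

lemma exists_eq_zero (h : SumGrowthLE l 0) : ∃ m, l m = 0 := by
  by_contra! hl
  obtain ⟨a, ha⟩ := h
  have hcard : (Finset.range (a + 1)).card • 1 ≤ ∑ m ∈ Finset.range (a + 1), l m :=
    Finset.card_nsmul_le_sum _ _ _ fun m _ => Nat.one_le_iff_ne_zero.2 (hl m)
  have := ha (a + 1)
  simp only [Finset.card_range, smul_eq_mul, mul_one, pow_zero] at hcard this
  omega

end SumGrowthLE

lemma succ_mul_sum_le_mul_sum {k l : ℕ → ℕ} {s : ℕ} (h : ∀ n, k n + l n ≤ l (n + s)) (N : ℕ) :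
    (N + 1) * ∑ m ∈ Finset.range N, k m ≤ s * ∑ m ∈ Finset.range (N + (N + 1) + s), l m := by
  let w (n : ℕ) : ℕ := ∑ i ∈ Finset.range s, l (n + i)
  have hw (n : ℕ) : w n + k n ≤ w (n + 1) := by
    have hsucc : w (n + 1) + l n = w n + l (n + s) := by
      rw [← Finset.sum_range_succ, Finset.sum_range_succ' _ s]
      simp only [w, add_assoc, add_comm 1, add_zero]
    have := h n
    omega
  have hsum (N : ℕ) : ∑ m ∈ Finset.range N, k m ≤ w N := by
    induction N with
    | zero => simp
    | succ N ih =>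
      rw [Finset.sum_range_succ]
      exact (Nat.add_le_add_right ih _).trans (hw N)
  have hmono : Monotone w := monotone_nat_of_le_succ fun n => le_self_add.trans (hw n)
  calc (N + 1) * ∑ m ∈ Finset.range N, k m
      = ∑ _j ∈ Finset.range (N + 1), ∑ m ∈ Finset.range N, k m := by simp
    _ ≤ ∑ j ∈ Finset.range (N + 1), ∑ i ∈ Finset.range s, l (N + j + i) :=
        Finset.sum_le_sum fun j _ => (hsum N).trans (hmono (Nat.le_add_right N j))
    _ = ∑ i ∈ Finset.range s, ∑ j ∈ Finset.range (N + 1), l (N + j + i) := Finset.sum_comm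
    _ ≤ ∑ _i ∈ Finset.range s, ∑ m ∈ Finset.range (N + (N + 1) + s), l m := by
        refine Finset.sum_le_sum fun i hi => ?_
        have hi := Finset.mem_range.1 hi
        refine le_trans (le_of_eq ?_) (sum_range_comp_add_le l (c := N + i) (N := N + 1)
          (by omega))
        exact Finset.sum_congr rfl fun j _ => by congr 1; ring
    _ = s * ∑ m ∈ Finset.range (N + (N + 1) + s), l m := by simp

lemma SumGrowthLE.of_add_le {k l : ℕ → ℕ} {s t : ℕ} (hl : SumGrowthLE l (t + 1))
    (h : ∀ n, k n + l n ≤ l (n + s)) : SumGrowthLE k t := by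
  obtain ⟨a, ha⟩ := hl
  refine ⟨s * (a * (s + 2) ^ (t + 1)), fun N => ?_⟩
  refine Nat.le_of_mul_le_mul_left (c := N + 1) ?_ N.succ_pos
  calc (N + 1) * ∑ m ∈ Finset.range N, k m
      ≤ s * ∑ m ∈ Finset.range (N + (N + 1) + s), l m := succ_mul_sum_le_mul_sum h N
    _ ≤ s * (a * ((s + 2) * (N + 1)) ^ (t + 1)) := by
        refine Nat.mul_le_mul_left s ((ha _).trans ?_)
        gcongr
        nlinarith
    _ = (N + 1) * (s * (a * (s + 2) ^ (t + 1)) * (N + 1) ^ t) := by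
        rw [mul_pow, pow_succ (N + 1)]
        ring

lemma le_sum_add_sum {k l : ℕ → ℕ} {s : ℕ} (hs : s ≠ 0) (h : ∀ n, l (n + s) ≤ k n + l n) (m : ℕ) :
    l m ≤ ∑ i ∈ Finset.range s, l i + ∑ i ∈ Finset.range m, k i := by
  induction m using Nat.strong_induction_on with
  | _ m ih =>
    rcases lt_or_ge m s with hm | hm
    · exact (Finset.single_le_sum (fun _ _ => Nat.zero_le _) (Finset.mem_range.2 hm)).trans
        le_self_add
    · obtain ⟨n, rfl⟩ := Nat.exists_eq_add_of_le' hm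
      calc l (n + s) ≤ k n + (∑ i ∈ Finset.range s, l i + ∑ i ∈ Finset.range n, k i) :=
            (h n).trans (Nat.add_le_add_left (ih n (by omega)) _)
        _ = ∑ i ∈ Finset.range s, l i + ∑ i ∈ Finset.range (n + 1), k i := by
            rw [Finset.sum_range_succ]
            ring
        _ ≤ _ := by
            gcongr
            omega

lemma SumGrowthLE.exists_le_of_le_add {k l : ℕ → ℕ} {s t : ℕ} (hk : SumGrowthLE k t) (hs : s ≠ 0)
    (h : ∀ n, l (n + s) ≤ k n + l n) : ∃ a, ∀ m, l m ≤ a * (m + 1) ^ t := by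
  obtain ⟨a, ha⟩ := hk
  refine ⟨∑ i ∈ Finset.range s, l i + a, fun m => (le_sum_add_sum hs h m).trans ?_⟩
  rw [add_mul]
  exact add_le_add (Nat.le_mul_of_pos_right _ (by positivity)) (ha m)

lemma sumGrowthLE_of_eventually_le {l : ℕ → ℕ} {s : ℕ} {a : ℝ}
    (h : ∀ᶠ n : ℕ in atTop, (l n : ℝ) ≤ a * (n : ℝ) ^ ((s : ℤ) - 1)) : SumGrowthLE l s := by
  cases s with
  | zero =>
    have hlim : Tendsto (fun n : ℕ => a * (n : ℝ) ^ (((0 : ℕ) : ℤ) - 1)) atTop (nhds 0) := by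
      simpa using (tendsto_inv_atTop_nhds_zero_nat (𝕜 := ℝ)).const_mul a
    obtain ⟨c, hc⟩ := eventually_atTop.1 (h.and (hlim.eventually_lt_const one_pos))
    have hzero (m : ℕ) : l (m + c) = 0 := by
      obtain ⟨hle, hlt⟩ := hc (m + c) (Nat.le_add_left c m)
      exact Nat.lt_one_iff.1 (by exact_mod_cast hle.trans_lt hlt)
    exact .of_comp_add (c := c) ⟨0, fun N => by simp [hzero]⟩
  | succ t =>
    obtain ⟨c, hc⟩ := eventually_atTop.1 h
    refine .of_comp_add (c := c) (.of_le (a := ⌈a⌉₊ * (c + 1) ^ t) fun m => ?_)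
    have hle : (l (m + c) : ℝ) ≤ ⌈a⌉₊ * ((m + c : ℕ) : ℝ) ^ t :=
      (hc (m + c) (Nat.le_add_left c m)).trans <| by
        rw [Nat.cast_succ, add_sub_cancel_right, zpow_natCast]
        gcongr
        exact Nat.le_ceil a
    calc l (m + c) ≤ ⌈a⌉₊ * (m + c) ^ t := by exact_mod_cast hle
      _ ≤ ⌈a⌉₊ * (m + c + 1) ^ t :=
        Nat.mul_le_mul_left _ (Nat.pow_le_pow_left (Nat.le_succ _) t)
      _ ≤ ⌈a⌉₊ * (c + 1) ^ t * (m + 1) ^ t := by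
        rw [mul_assoc]
        exact Nat.mul_le_mul_left _ (add_pow_le_mul_pow c m t)

lemma eventually_le_of_forall_le {l : ℕ → ℕ} {a t : ℕ} (h : ∀ m, l m ≤ a * (m + 1) ^ t) :
    ∀ᶠ n : ℕ in atTop, (l n : ℝ) ≤ (a * 2 ^ t : ℕ) * (n : ℝ) ^ (((t + 1 : ℕ) : ℤ) - 1) := by
  filter_upwards [eventually_ge_atTop 1] with n hn
  rw [Nat.cast_succ, add_sub_cancel_right, zpow_natCast]
  have hle : l n ≤ a * 2 ^ t * n ^ t :=
    calc l n ≤ a * (n + 1) ^ t := h n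
      _ ≤ a * (2 * n) ^ t := by gcongr; omega
      _ = a * 2 ^ t * n ^ t := by ring
  exact_mod_cast hle

lemma complexityPlus_le_complexityPlus {β γ : ℤ → ℕ}
    (h₀ : SumGrowthLE (fun n => β n) 0 → ∀ n, γ n = 0)
    (h : ∀ t, SumGrowthLE (fun n => β n) (t + 1) → ∃ a, ∀ m : ℕ, γ m ≤ a * (m + 1) ^ t) :
    complexityPlus γ ≤ complexityPlus β := by
  refine sInf_le_sInf ?_
  rintro _ ⟨s, rfl, a, ha⟩
  have hβ : SumGrowthLE (fun n => β n) s := sumGrowthLE_of_eventually_le ha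
  cases s with
  | zero => exact ⟨0, rfl, 0, .of_forall fun n => by simp [h₀ hβ]⟩
  | succ t =>
    obtain ⟨b, hb⟩ := h t hβ
    exact ⟨t + 1, rfl, _, eventually_le_of_forall_le hb⟩

end PolynomialGrowth

section SymmetricGrowth

variable {B : Type u} [CommRing B] [IsLocalRing B] [IsNoetherianRing B]
  {R : LocalRegularSequence B}

namespace LiftedComplex

variable {S : LiftedComplex R}

lemma betti_eq_zero_of_sumGrowthLE (hS : S.IsExactMod R.ideal) (hS' : S.IsDualExactMod R.ideal)
    (h : SumGrowthLE (fun n => S.betti n) 0) (n : ℤ) : S.betti n = 0 := by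
  obtain ⟨m, hm⟩ := h.exists_eq_zero
  exact betti_eq_zero_iff.2 <| forall_component_eq_zero (R.initialIdeal_le_maximalIdeal le_rfl)
    S.d_d_mem hS hS' (betti_eq_zero_iff.1 hm) n

lemma exists_cone_sumGrowthLE (hS : S.IsExactMod R.ideal) (hS' : S.IsDualExactMod R.ideal)
    (hfg : S.FGTruncations) :
    ∃ K : LiftedComplex R, K.IsExactMod R.ideal ∧ K.IsDualExactMod R.ideal ∧ K.FGTruncations ∧
      ∀ t, (SumGrowthLE (fun n => S.betti n) (t + 1) → SumGrowthLE (fun n => K.betti n) t) ∧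
        (SumGrowthLE (fun n => K.betti (-n)) t → ∃ a, ∀ m : ℕ, S.betti (-m) ≤ a * (m + 1) ^ t) := by
  obtain ⟨s, f, n₀, hs, ⟨T, hT, hchain, hfT⟩, hinj⟩ := exists_isLiftable_injOn_truncation hfg
  let D := mappingCone hT hchain
  refine ⟨D.cone, isExactMod_mappingCone hT hchain hS, isDualExactMod_mappingCone hT hchain hS',
    D.fgTruncations_cone hfg, fun t => ⟨fun h => ?_, fun h => ?_⟩⟩
  · have hcone (m : ℕ) : D.cone.betti (m + (n₀.toNat + s : ℕ)) + S.betti (m + n₀.toNat) =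
        S.betti (m + s + n₀.toNat) := by
      have := D.betti_cone_add_eq (n := m + n₀.toNat) fun p hp a ha =>
        hinj _ (S.component_mem_truncation (by omega) a) ((hfT _).trans ha)
      convert this using 2 <;> · push_cast [D, mappingCone]; ring_nf
    refine .of_comp_add (c := n₀.toNat + s) ((h.comp_add n₀.toNat).of_add_le (s := s) fun m => ?_)
    simpa using (hcone m).le
  · refine (h.comp_add 1).exists_le_of_le_add hs fun m => ?_
    convert D.betti_le (-(m + s : ℕ)) using 3 <;> · push_cast [D, mappingCone]; ring_nf

theorem exists_betti_neg_le {t : ℕ} (hS : S.IsExactMod R.ideal) (hS' : S.IsDualExactMod R.ideal)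
    (hfg : S.FGTruncations) (h : SumGrowthLE (fun n => S.betti n) (t + 1)) :
    ∃ a, ∀ m : ℕ, S.betti (-m) ≤ a * (m + 1) ^ t := by
  induction t generalizing S with
  | zero =>
    obtain ⟨K, hK, hK', -, hKt⟩ := exists_cone_sumGrowthLE hS hS' hfg
    exact (hKt 0).2 ⟨0, by simp [betti_eq_zero_of_sumGrowthLE hK hK' ((hKt 0).1 h)]⟩
  | succ t ih =>
    obtain ⟨K, hK, hK', hKfg, hKt⟩ := exists_cone_sumGrowthLE hS hS' hfg
    obtain ⟨a, ha⟩ := ih hK hK' hKfg ((hKt (t + 1)).1 h)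
    exact (hKt (t + 1)).2 (.of_le ha)

theorem complexityMinus_betti_le (hS : S.IsExactMod R.ideal) (hS' : S.IsDualExactMod R.ideal)
    (hfg : S.FGTruncations) : complexityMinus S.betti ≤ complexityPlus S.betti :=
  complexityPlus_le_complexityPlus
    (fun h n => betti_eq_zero_of_sumGrowthLE hS hS' h (-n))
    fun _ h => exists_betti_neg_le hS hS' hfg h

end LiftedComplex

end SymmetricGrowth

section MatrixComplex

open Matrix

namespace GradedFree

variable {B : Type u} [CommRing B] {r : ℤ → ℕ}

/-- The graded free module of rank `r n` in degree `n`, whose elements are the finitely supported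
families of column vectors. -/
noncomputable abbrev ofRank (B : Type u) [CommRing B] (r : ℤ → ℕ) : GradedFree B where
  carrier := Π₀ n : ℤ, Fin (r n) → B
  index := Σ n : ℤ, Fin (r n)
  basis := DFinsupp.basis fun n => Pi.basisFun B (Fin (r n))
  degree := Sigma.fst
  finite_degree n := (Set.finite_range (Sigma.mk n)).subset fun ⟨_, k⟩ h => by
    obtain rfl := h
    exact ⟨k, rfl⟩

lemma basis_repr_ofRank (v : ofRank B r) (n : ℤ) (k : Fin (r n)) :
    (ofRank B r).basis.repr v ⟨n, k⟩ = v n k := rfl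

lemma basis_ofRank (n : ℤ) (k : Fin (r n)) :
    (ofRank B r).basis ⟨n, k⟩ = DFinsupp.single n (Pi.single k 1) := by
  rw [← (ofRank B r).basis.repr_symm_single_one, LinearEquiv.symm_apply_eq]
  ext ⟨m, l⟩
  rw [basis_repr_ofRank]
  obtain rfl | hm := eq_or_ne n m
  · obtain rfl | hl := eq_or_ne k l
    · simp
    · simp [hl.symm]
  · simp [hm, DFinsupp.single_apply]

lemma proj_ofRank (n : ℤ) (v : ofRank B r) :
    (ofRank B r).proj n v = DFinsupp.single n (v n) := by
  suffices (ofRank B r).proj n = DFinsupp.lsingle n ∘ₗ DFinsupp.lapply n from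
    LinearMap.congr_fun this v
  refine (ofRank B r).basis.ext fun ⟨m, k⟩ => ?_
  rw [proj_basis, basis_ofRank]
  obtain rfl | hm := eq_or_ne m n
  · simp
  · simp [hm]

lemma mem_smul_top_ofRank {J : Ideal B} {v : ofRank B r} :
    v ∈ (J • ⊤ : Submodule B (ofRank B r)) ↔ ∀ n k, v n k ∈ J := by
  rw [basis_mem_smul_top (ofRank B r).basis]
  exact ⟨fun h n k => h ⟨n, k⟩, fun h ⟨n, k⟩ => h n k⟩

section Reduce

variable (A : Type*) [CommRing A] [Algebra B A]

variable (B r) in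
/-- The reduction to a `B`-algebra `A` of the component of degree `n`. -/
def reduce (n : ℤ) : ofRank B r →ₗ[B] Fin (r n) → A :=
  (Algebra.linearMap B A).compLeft (Fin (r n)) ∘ₗ DFinsupp.lapply n

lemma reduce_apply (n : ℤ) (v : ofRank B r) : reduce B r A n v = algebraMap B A ∘ v n := rfl

lemma reduce_single (n : ℤ) (u : Fin (r n) → B) :
    reduce B r A n (DFinsupp.single n u : ofRank B r) = algebraMap B A ∘ u :=
  congrArg (algebraMap B A ∘ ·) DFinsupp.single_eq_same

lemma reduce_proj_self (n : ℤ) (v : ofRank B r) :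
    reduce B r A n ((ofRank B r).proj n v) = reduce B r A n v := by
  rw [proj_ofRank, reduce_single, reduce_apply]

lemma reduce_proj_of_ne {m n : ℤ} (h : m ≠ n) (v : ofRank B r) :
    reduce B r A m ((ofRank B r).proj n v) = 0 := by
  rw [← reduce_proj_self, proj_proj_of_ne _ h, map_zero]

lemma mem_ker_smul_top_iff {v : ofRank B r} :
    v ∈ (RingHom.ker (algebraMap B A) • ⊤ : Submodule B (ofRank B r)) ↔
      ∀ n, reduce B r A n v = 0 := by
  rw [mem_smul_top_ofRank]
  exact forall_congr' fun n => funext_iff.symm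

variable {A}

lemma reduce_surjective (hsurj : Function.Surjective (algebraMap B A)) (n : ℤ) :
    Function.Surjective (reduce B r A n) := fun w =>
  ⟨DFinsupp.single n (Function.surjInv hsurj ∘ w), by
    rw [reduce_single, ← Function.comp_assoc, (Function.rightInverse_surjInv hsurj).id,
      Function.id_comp]⟩

end Reduce

/-- The endomorphism of degree `1` with matrices `D n`. -/
noncomputable def ofMatrices (D : ∀ n, Matrix (Fin (r (n + 1))) (Fin (r n)) B) :
    ofRank B r →ₗ[B] ofRank B r :=
  DFinsupp.lsum ℕ fun n => DFinsupp.lsingle (n + 1) ∘ₗ (D n).mulVecLin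

variable (D : ∀ n, Matrix (Fin (r (n + 1))) (Fin (r n)) B)

lemma ofMatrices_single (n : ℤ) (u : Fin (r n) → B) :
    ofMatrices D (DFinsupp.single n u) = DFinsupp.single (n + 1) (D n *ᵥ u) := by
  simp [ofMatrices]

lemma ofMatrices_apply (v : ofRank B r) (n : ℤ) : ofMatrices D v (n + 1) = D n *ᵥ v n := by
  suffices DFinsupp.lapply (n + 1) ∘ₗ ofMatrices D = (D n).mulVecLin ∘ₗ DFinsupp.lapply n from
    LinearMap.congr_fun this v
  refine DFinsupp.lhom_ext fun m u => ?_
  change ofMatrices D (DFinsupp.single m u) (n + 1) =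
    D n *ᵥ (DFinsupp.single m u : Π₀ n : ℤ, Fin (r n) → B) n
  rw [ofMatrices_single]
  obtain rfl | hm := eq_or_ne m n
  · simp
  · simp [hm]

lemma ofMatrices_basis (n : ℤ) (k : Fin (r n)) :
    ofMatrices D ((ofRank B r).basis ⟨n, k⟩) =
      ∑ i, D n i k • (ofRank B r).basis ⟨n + 1, i⟩ := by
  have hsum : ∑ i, D n i k • (ofRank B r).basis ⟨n + 1, i⟩ =
      DFinsupp.lsingle (R := B) (n + 1) (∑ i, D n i k • Pi.single i 1) := by
    simp only [map_sum, map_smul, DFinsupp.lsingle_apply]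
    exact Finset.sum_congr rfl fun i _ => congrArg _ (basis_ofRank _ i)
  rw [basis_ofRank, ofMatrices_single, hsum, mulVec_single_one, DFinsupp.lsingle_apply]
  congr 1
  ext i
  simp [Finset.sum_apply, Pi.single_apply]

lemma isHomogeneous_ofMatrices :
    IsHomogeneous (G := ofRank B r) (H := ofRank B r) 1 (ofMatrices D) := by
  intro n v
  rw [proj_ofRank, proj_ofRank, ofMatrices_single, ofMatrices_apply]

end GradedFree

/-- A totally acyclic complex of finitely generated free modules, given by the matrices of its
differentials. The grading is cohomological: `d n` goes from degree `n` to degree `n + 1`. -/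
structure MatrixComplex (A : Type u) [CommRing A] where
  rank : ℤ → ℕ
  d : ∀ n, Matrix (Fin (rank (n + 1))) (Fin (rank n)) A
  exact : ∀ n, Function.Exact (d n).mulVecLin (d (n + 1)).mulVecLin
  dualExact : ∀ n, Function.Exact (d (n + 1))ᵀ.mulVecLin (d n)ᵀ.mulVecLin

lemma exists_forall_add_one {α : ℤ → Type*} {P : ∀ n, α (n + 1) → Prop}
    (h : ∀ n, ∃ a, P n a) : ∃ f : ∀ n, α n, ∀ n, P n (f (n + 1)) := by
  have h' (n : ℤ) : ∃ a : α n, ∀ m (hm : n = m + 1), P m (hm ▸ a) := by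
    obtain ⟨m, rfl⟩ : ∃ m, n = m + 1 := ⟨n - 1, by simp⟩
    obtain ⟨a, ha⟩ := h m
    refine ⟨a, fun l hl => ?_⟩
    obtain rfl : m = l := by omega
    exact ha
  choose f hf using h'
  exact ⟨f, fun n => hf _ n rfl⟩

namespace MatrixComplex

variable {B A : Type u} [CommRing B] [CommRing A] [Algebra B A] (X : MatrixComplex A)

variable (hsurj : Function.Surjective (algebraMap B A))

/-- A lifting to `B` of the total differential. -/
noncomputable def liftD : GradedFree.ofRank B X.rank →ₗ[B] GradedFree.ofRank B X.rank :=
  GradedFree.ofMatrices fun n => (X.d n).map (Function.surjInv hsurj)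

lemma reduce_liftD (n : ℤ) (v : GradedFree.ofRank B X.rank) :
    GradedFree.reduce B X.rank A (n + 1) (X.liftD hsurj v) =
      X.d n *ᵥ GradedFree.reduce B X.rank A n v := by
  have hd : ((X.d n).map (Function.surjInv hsurj)).map (algebraMap B A) = X.d n := by
    ext i k
    simp [Function.surjInv_eq hsurj]
  rw [GradedFree.reduce_apply, liftD, GradedFree.ofMatrices_apply]
  ext i
  rw [Function.comp_apply, RingHom.map_mulVec, hd, GradedFree.reduce_apply]

/-- The reduction to `A` of the component of degree `n` of a linear form. -/
noncomputable def reduceDual (φ : GradedFree.ofRank B X.rank →ₗ[B] B) (n : ℤ) :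
    Fin (X.rank n) → A :=
  fun k => algebraMap B A (φ ((GradedFree.ofRank B X.rank).basis ⟨n, k⟩))

lemma algebraMap_apply_liftD_basis (φ : GradedFree.ofRank B X.rank →ₗ[B] B) (n : ℤ)
    (k : Fin (X.rank n)) :
    algebraMap B A (φ (X.liftD hsurj ((GradedFree.ofRank B X.rank).basis ⟨n, k⟩))) =
      ((X.d n)ᵀ *ᵥ X.reduceDual φ (n + 1)) k := by
  rw [liftD, GradedFree.ofMatrices_basis]
  simp [mulVec, dotProduct, reduceDual, Function.surjInv_eq hsurj]

variable [IsLocalRing B] {R : LocalRegularSequence B}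
  (hker : RingHom.ker (algebraMap B A) = R.ideal)

include hker in
lemma mem_ideal_smul_top_iff {v : GradedFree.ofRank B X.rank} :
    v ∈ (R.ideal • ⊤ : Submodule B (GradedFree.ofRank B X.rank)) ↔
      ∀ n, GradedFree.reduce B X.rank A n v = 0 := by
  rw [← hker]
  exact GradedFree.mem_ker_smul_top_iff A

/-- A lifting to `B` of a matrix complex over a quotient of `B` by a regular sequence. -/
noncomputable abbrev lift : LiftedComplex R where
  F := GradedFree.ofRank B X.rank
  d := X.liftD hsurj
  isHomogeneous_d := GradedFree.isHomogeneous_ofMatrices _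
  d_d_mem v := by
    rw [X.mem_ideal_smul_top_iff hker]
    intro n
    rw [← sub_add_cancel n 1, ← sub_add_cancel (n - 1) 1, reduce_liftD, reduce_liftD]
    exact (X.exact _).apply_apply_eq_zero _

lemma proj_mem_boundariesMod_iff {n : ℤ} {v : GradedFree.ofRank B X.rank} :
    (X.lift hsurj hker).F.proj n v ∈ (X.lift hsurj hker).boundariesMod R.ideal ↔
      X.d n *ᵥ GradedFree.reduce B X.rank A n v = 0 := by
  obtain ⟨m, rfl⟩ : ∃ m, n = m + 1 := ⟨n - 1, by simp⟩
  rw [← mulVecLin_apply, X.exact m _, LiftedComplex.mem_boundariesMod]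
  simp only [X.mem_ideal_smul_top_iff hker, map_sub, sub_eq_zero]
  constructor
  · rintro ⟨w, hw⟩
    refine ⟨GradedFree.reduce B X.rank A m w, ?_⟩
    rw [← GradedFree.reduce_proj_self A (m + 1) v, hw, X.reduce_liftD, mulVecLin_apply]
  · rintro ⟨u, hu⟩
    obtain ⟨w, rfl⟩ := GradedFree.reduce_surjective hsurj m u
    refine ⟨(X.lift hsurj hker).F.proj m w, fun l => ?_⟩
    have hproj := (X.lift hsurj hker).proj_d (m + 1) w
    rw [add_sub_cancel_right] at hproj
    rw [← hproj]
    obtain rfl | hl := eq_or_ne l (m + 1)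
    · rw [GradedFree.reduce_proj_self, GradedFree.reduce_proj_self, ← hu, X.reduce_liftD,
        mulVecLin_apply]
    · rw [GradedFree.reduce_proj_of_ne A hl, GradedFree.reduce_proj_of_ne A hl]

lemma isExactMod_lift : (X.lift hsurj hker).IsExactMod R.ideal := by
  intro v hv
  refine LiftedComplex.mem_boundariesMod.1 (GradedFree.mem_of_proj_mem _ _ fun n => ?_)
  rw [proj_mem_boundariesMod_iff, ← X.reduce_liftD hsurj]
  exact (X.mem_ideal_smul_top_iff hker).1 hv (n + 1)

lemma isDualExactMod_lift : (X.lift hsurj hker).IsDualExactMod R.ideal := by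
  intro φ hφ
  simp only [← hker, RingHom.mem_ker] at hφ ⊢
  have hφd (n : ℤ) : (X.d n)ᵀ *ᵥ X.reduceDual φ (n + 1) = 0 := by
    ext k
    rw [← X.algebraMap_apply_liftD_basis hsurj, Pi.zero_apply]
    exact hφ _
  obtain ⟨b, hb⟩ := exists_forall_add_one (α := fun n => Fin (X.rank n) → A)
    (P := fun n b => (X.d n)ᵀ *ᵥ b = X.reduceDual φ n) fun n => by
      obtain ⟨m, rfl⟩ : ∃ m, n = m + 1 := ⟨n - 1, by simp⟩
      exact (X.dualExact m _).1 (hφd m)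
  let ψ := (GradedFree.ofRank B X.rank).basis.constr B fun i =>
    Function.surjInv hsurj (b i.1 i.2)
  have hψ (n : ℤ) : X.reduceDual ψ n = b n := by
    ext k
    rw [reduceDual, Module.Basis.constr_basis, Function.surjInv_eq hsurj]
  refine ⟨ψ, fun v => ?_⟩
  suffices Algebra.linearMap B A ∘ₗ (φ - ψ ∘ₗ X.liftD hsurj) = 0 from LinearMap.congr_fun this v
  refine (GradedFree.ofRank B X.rank).basis.ext fun ⟨n, k⟩ => ?_
  rw [LinearMap.comp_apply, LinearMap.sub_apply, LinearMap.comp_apply, Algebra.linearMap_apply,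
    map_sub, X.algebraMap_apply_liftD_basis, hψ, hb, LinearMap.zero_apply, sub_eq_zero]
  rfl

/-- The cokernel of the lifted differential modulo the regular sequence is the image of the next
differential. -/
noncomputable def cokernelModEquiv (n : ℤ) :
    (X.lift hsurj hker).cokernelMod R.ideal n ≃ₗ[B] LinearMap.range (X.d n).mulVecLin :=
  let f : GradedFree.ofRank B X.rank →ₗ[B] LinearMap.range (X.d n).mulVecLin :=
    (X.d n).mulVecLin.rangeRestrict.restrictScalars B ∘ₗ GradedFree.reduce B X.rank A n
  have hker_f : ((X.lift hsurj hker).boundariesMod R.ideal).comap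
      ((X.lift hsurj hker).F.proj n) = LinearMap.ker f := by
    ext v
    rw [Submodule.mem_comap, proj_mem_boundariesMod_iff, LinearMap.mem_ker, ← Subtype.coe_inj]
    rfl
  Submodule.quotEquivOfEq _ _ hker_f ≪≫ₗ f.quotKerEquivOfSurjective
    ((X.d n).mulVecLin.surjective_rangeRestrict.comp (GradedFree.reduce_surjective hsurj n))

section Minimal

variable {X} [IsLocalRing A] (hmin : ∀ n i k, X.d n i k ∈ maximalIdeal A)

include hmin

lemma liftD_mem_smul_top (v : GradedFree.ofRank B X.rank) :
    X.liftD hsurj v ∈ (maximalIdeal B • ⊤ : Submodule B (GradedFree.ofRank B X.rank)) := by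
  have hentry (n : ℤ) (i k) : Function.surjInv hsurj (X.d n i k) ∈ maximalIdeal B := fun hunit =>
    hmin n i k (by simpa [Function.surjInv_eq hsurj] using hunit.map (algebraMap B A))
  rw [GradedFree.mem_smul_top_ofRank]
  intro n i
  obtain ⟨n, rfl⟩ : ∃ m, n = m + 1 := ⟨n - 1, by simp⟩
  rw [liftD, GradedFree.ofMatrices_apply, mulVec, dotProduct]
  exact Ideal.sum_mem _ fun k _ => Ideal.mul_mem_right _ _ (hentry n i k)

lemma mem_cycles_lift (v : GradedFree.ofRank B X.rank) : v ∈ (X.lift hsurj hker).cycles :=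
  liftD_mem_smul_top hsurj hmin v

lemma boundaries_lift : (X.lift hsurj hker).boundaries = (X.lift hsurj hker).mF := by
  refine le_antisymm (sup_le ?_ le_rfl) le_sup_right
  rintro _ ⟨v, rfl⟩
  exact liftD_mem_smul_top hsurj hmin v

lemma component_homologyClass_lift_eq_zero_iff (n : ℤ) (v : GradedFree.ofRank B X.rank) :
    (X.lift hsurj hker).component n ((X.lift hsurj hker).homologyClass
      ⟨v, mem_cycles_lift hsurj hker hmin v⟩) = 0 ↔
      GradedFree.reduce B X.rank (ResidueField B) n v = 0 := by
  rw [LiftedComplex.component_homologyClass, LiftedComplex.homologyClass_eq_zero,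
    boundaries_lift hsurj hker hmin, LiftedComplex.mF, ← ker_residue]
  refine (GradedFree.mem_ker_smul_top_iff (ResidueField B)).trans ⟨fun h => ?_, fun h m => ?_⟩
  · rw [← GradedFree.reduce_proj_self, h]
  · obtain rfl | hm := eq_or_ne m n
    · rw [GradedFree.reduce_proj_self, h]
    · exact GradedFree.reduce_proj_of_ne _ hm v

lemma betti_lift : (X.lift hsurj hker).betti = X.rank := by
  ext n
  let S := X.lift hsurj hker
  let f : GradedFree.ofRank B X.rank →ₗ[B] LinearMap.range (S.component n) :=
    (S.component n).rangeRestrict ∘ₗ S.homologyClass ∘ₗ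
      LinearMap.id.codRestrict S.cycles (mem_cycles_lift hsurj hker hmin)
  have hf : Function.Surjective f :=
    (S.component n).surjective_rangeRestrict.comp (S.homologyClass_surjective.comp
      fun z => ⟨z, rfl⟩)
  let g : GradedFree.ofRank B X.rank →ₗ[B] Fin (X.rank n) → ResidueField B :=
    GradedFree.reduce B X.rank (ResidueField B) n
  have hfg : LinearMap.ker f = LinearMap.ker g := by
    ext v
    rw [LinearMap.mem_ker, LinearMap.mem_ker, ← Subtype.coe_inj]
    exact component_homologyClass_lift_eq_zero_iff hsurj hker hmin n v
  let e : LinearMap.range (S.component n) ≃ₗ[B] Fin (X.rank n) → ResidueField B :=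
    (f.quotKerEquivOfSurjective hf).symm ≪≫ₗ Submodule.quotEquivOfEq _ _ hfg ≪≫ₗ
      g.quotKerEquivOfSurjective (GradedFree.reduce_surjective residue_surjective n)
  rw [LiftedComplex.betti, e.length_eq, Module.length_pi]
  have : IsSimpleModule B (ResidueField B) :=
    isSimpleModule_iff_isCoatom.2 (maximalIdeal.isMaximal B).out
  simp [Module.length_eq_one]

include hsurj hker in
theorem complexityMinus_rank_le [IsNoetherianRing B] {n : ℤ} {k : ℕ}
    (h : ProjDimLT B (LinearMap.range (X.d n).mulVecLin) k) :
    complexityMinus X.rank ≤ complexityPlus X.rank := by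
  rw [← betti_lift hsurj hker hmin]
  have hexact := X.isExactMod_lift hsurj hker
  have hdual := X.isDualExactMod_lift hsurj hker
  exact LiftedComplex.complexityMinus_betti_le hexact hdual
    (LiftedComplex.fgTruncations_of_projDimLT le_rfl (X.lift hsurj hker).d_d_mem hexact hdual
      (h.of_linearEquiv (X.cokernelModEquiv hsurj hker n)))

end Minimal

end MatrixComplex

end MatrixComplex

section Matrices

open Matrix

section ToMatrix

variable {A M N P : Type*} [CommRing A] [AddCommGroup M] [Module A M] [AddCommGroup N]
  [Module A N] [AddCommGroup P] [Module A P] {l m n : Type*} [Fintype l] [DecidableEq l]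

lemma mulVecLin_toMatrix [Finite m] (b : Module.Basis l A M) (c : Module.Basis m A N)
    (f : M →ₗ[A] N) :
    (LinearMap.toMatrix b c f).mulVecLin = c.equivFun ∘ₗ f ∘ₗ b.equivFun.symm := by
  refine LinearMap.ext fun v => ?_
  obtain ⟨v, rfl⟩ := b.equivFun.surjective v
  simpa using LinearMap.toMatrix_mulVec_repr b c f v

lemma exact_mulVecLin_toMatrix [Fintype m] [DecidableEq m] [Finite n] (b : Module.Basis l A M)
    (c : Module.Basis m A N) (e : Module.Basis n A P) {f : M →ₗ[A] N} {g : N →ₗ[A] P}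
    (h : Function.Exact f g) :
    Function.Exact (LinearMap.toMatrix b c f).mulVecLin (LinearMap.toMatrix c e g).mulVecLin := by
  rw [mulVecLin_toMatrix, mulVecLin_toMatrix]
  exact h.of_ladder_linearEquiv_of_exact (e₁ := b.equivFun) (e₂ := c.equivFun) (e₃ := e.equivFun)
    (LinearMap.ext fun v => by simp) (LinearMap.ext fun v => by simp)

/-- The column space of the matrix of a linear map is isomorphic to its image. -/
noncomputable def rangeToMatrixEquiv [Finite m] (b : Module.Basis l A M) (c : Module.Basis m A N)
    (f : M →ₗ[A] N) :
    LinearMap.range f ≃ₗ[A] LinearMap.range (LinearMap.toMatrix b c f).mulVecLin :=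
  c.equivFun.submoduleMap (LinearMap.range f) ≪≫ₗ LinearEquiv.ofEq _ _ (by
    rw [mulVecLin_toMatrix, LinearMap.range_comp, LinearEquiv.range_comp])

end ToMatrix

section BaseChange

variable {A : Type*} (A' : Type*) [CommRing A] [CommRing A'] [Algebra A A']

section Range

variable {M N : Type*} [AddCommGroup M] [Module A M] [AddCommGroup N] [Module A N]

lemma range_baseChange (f : M →ₗ[A] N) :
    LinearMap.range (f.baseChange A') = (LinearMap.range f).baseChange A' := by
  have hf : f = (LinearMap.range f).subtype ∘ₗ f.rangeRestrict := rfl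
  conv_lhs => rw [hf, LinearMap.baseChange_comp]
  rw [LinearMap.range_comp_of_range_eq_top]
  · rfl
  · exact LinearMap.range_eq_top.2 (LinearMap.lTensor_surjective A' f.surjective_rangeRestrict)

/-- Flat base change commutes with images. -/
noncomputable def rangeBaseChangeEquiv [Module.Flat A A'] (f : M →ₗ[A] N) :
    A' ⊗[A] LinearMap.range f ≃ₗ[A'] LinearMap.range (f.baseChange A') :=
  Submodule.toBaseChange.toLinearEquiv A' _ ≪≫ₗ LinearEquiv.ofEq _ _ (range_baseChange A' f).symm

end Range

variable {l m n : Type*} [Fintype l]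

lemma toMatrix_mulVecLin_baseChange [DecidableEq l] [Finite m] (D : Matrix m l A) :
    LinearMap.toMatrix (Algebra.TensorProduct.basis A' (Pi.basisFun A l))
      (Algebra.TensorProduct.basis A' (Pi.basisFun A m)) (D.mulVecLin.baseChange A') =
        D.map (algebraMap A A') := by
  rw [LinearMap.toMatrix_baseChange, ← Matrix.toLin'_apply', ← Matrix.toLin_eq_toLin',
    LinearMap.toMatrix_toLin]

lemma exact_mulVecLin_map [Fintype m] [Finite n] [Module.Flat A A'] {D : Matrix m l A}
    {E : Matrix n m A} (h : Function.Exact D.mulVecLin E.mulVecLin) :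
    Function.Exact (D.map (algebraMap A A')).mulVecLin (E.map (algebraMap A A')).mulVecLin := by
  classical
  rw [← toMatrix_mulVecLin_baseChange, ← toMatrix_mulVecLin_baseChange]
  exact exact_mulVecLin_toMatrix _ _ _ (Module.Flat.lTensor_exact A' h)

end BaseChange

namespace MatrixComplex

variable {A : Type u} (A' : Type u) [CommRing A] [CommRing A'] [Algebra A A'] [Module.Flat A A']
  (X : MatrixComplex A)

/-- Base change of a totally acyclic complex along a flat extension. -/
def baseChange : MatrixComplex A' where
  rank := X.rank
  d n := (X.d n).map (algebraMap A A')
  exact n := exact_mulVecLin_map A' (X.exact n)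
  dualExact n := exact_mulVecLin_map A' (X.dualExact n)

/-- The images of the differentials of a complex obtained by flat base change. -/
noncomputable def baseChangeRangeEquiv (n : ℤ) :
    A' ⊗[A] LinearMap.range (X.d n).mulVecLin ≃ₗ[A']
      LinearMap.range ((X.baseChange A').d n).mulVecLin :=
  rangeBaseChangeEquiv A' (X.d n).mulVecLin ≪≫ₗ
    rangeToMatrixEquiv (Algebra.TensorProduct.basis A' (Pi.basisFun A _))
      (Algebra.TensorProduct.basis A' (Pi.basisFun A _)) _ ≪≫ₗ
    LinearEquiv.ofEq _ _ (by rw [toMatrix_mulVecLin_baseChange]; rfl)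

theorem complexityMinus_rank_le_of_retract {X : MatrixComplex A} [IsLocalRing A] [IsLocalRing A']
    [IsLocalHom (algebraMap A A')] (hmin : ∀ n i k, X.d n i k ∈ maximalIdeal A)
    {B : Type u} [CommRing B] [IsLocalRing B] [IsNoetherianRing B] [Algebra B A']
    (hsurj : Function.Surjective (algebraMap B A')) {R : LocalRegularSequence B}
    (hker : RingHom.ker (algebraMap B A') = R.ideal) {N T : Type u} [AddCommGroup N] [Module A N]
    {n : ℤ} (e : N ≃ₗ[A] LinearMap.range (X.d n).mulVecLin) [AddCommGroup T] [Module A' T]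
    [Module B T] [IsScalarTower B A' T] {i : A' ⊗[A] N →ₗ[A'] T} {r : T →ₗ[A'] A' ⊗[A] N}
    (hri : r ∘ₗ i = LinearMap.id) {k : ℕ} (hT : ProjDimLT B T k) :
    complexityMinus X.rank ≤ complexityPlus X.rank := by
  let e' := e.baseChange A A' N _ ≪≫ₗ X.baseChangeRangeEquiv A' n
  refine complexityMinus_rank_le (X := X.baseChange A') (n := n) hsurj hker
    (fun n i k => ?_) (hT.of_retract (i := (i ∘ₗ e'.symm.toLinearMap).restrictScalars B)
      (r := (e'.toLinearMap ∘ₗ r).restrictScalars B) ?_)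
  · exact map_nonunit (algebraMap A A') _ (hmin n i k)
  · ext1 v
    simpa using congrArg e' (LinearMap.congr_fun hri (e'.symm v))

end MatrixComplex

end Matrices

section TotallyAcyclicComplex

/-- The dual of the image of a totally acyclic differential is the image of the dual one. -/
noncomputable def dualRangeEquiv {A L M N : Type*} [CommRing A] [AddCommGroup L] [Module A L]
    [AddCommGroup M] [Module A M] [AddCommGroup N] [Module A N] {e : L →ₗ[A] M} {f : M →ₗ[A] N}
    (h : LinearMap.range e = LinearMap.ker f)
    (hdual : LinearMap.range f.dualMap = LinearMap.ker e.dualMap) :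
    Module.Dual A (LinearMap.range f) ≃ₗ[A] LinearMap.range f.dualMap :=
  LinearEquiv.ofInjective f.rangeRestrict.dualMap
      (LinearMap.dualMap_injective_of_surjective f.surjective_rangeRestrict) ≪≫ₗ
    LinearEquiv.ofEq _ _ (by
      rw [LinearMap.range_dualMap_eq_dualAnnihilator_ker_of_surjective _
        f.surjective_rangeRestrict, LinearMap.ker_rangeRestrict, ← h,
        ← LinearMap.ker_dualMap_eq_dualAnnihilator_range, hdual])

variable {A : Type u} [CommRing A] (X : TotallyAcyclicComplex A)

/-- The differential of a complex, with the relation between the degrees of its source and target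
as a hypothesis. -/
def differential {p q : ℤ} (h : p = q + 1) : X.C p →ₗ[A] X.C q :=
  match p, h with
  | _, rfl => X.d q

lemma exact_differential {p q r : ℤ} (h : p = q + 1) (h' : q = r + 1) :
    Function.Exact (differential X h) (differential X h') := by
  subst h h'
  exact LinearMap.exact_iff.2 (X.exact r).symm

lemma exact_dualMap_differential {p q r : ℤ} (h : p = q + 1) (h' : q = r + 1) :
    Function.Exact (differential X h').dualMap (differential X h).dualMap := by
  subst h h'
  exact LinearMap.exact_iff.2 (X.dualExact r).symm

variable [Nontrivial A]

/-- A choice of basis in every degree. -/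
noncomputable def chosenBasis (n : ℤ) :
    Module.Basis (Fin (Module.finrank A (X.C n))) A (X.C n) :=
  have := X.free n
  have := X.fin n
  Module.finBasis A (X.C n)

/-- The matrix of a differential in the chosen bases. -/
noncomputable def differentialMatrix {p q : ℤ} (h : p = q + 1) :
    Matrix (Fin (Module.finrank A (X.C q))) (Fin (Module.finrank A (X.C p))) A :=
  LinearMap.toMatrix (chosenBasis X p) (chosenBasis X q) (differential X h)

lemma exact_differentialMatrix {p q r : ℤ} (h : p = q + 1) (h' : q = r + 1) :
    Function.Exact (differentialMatrix X h).mulVecLin (differentialMatrix X h').mulVecLin :=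
  exact_mulVecLin_toMatrix _ _ _ (exact_differential X h h')

lemma toMatrix_dualMap_differential {p q : ℤ} (h : p = q + 1) :
    LinearMap.toMatrix (chosenBasis X q).dualBasis (chosenBasis X p).dualBasis
      (differential X h).dualMap = (differentialMatrix X h).transpose := by
  rw [LinearMap.dualMap_def, LinearMap.toMatrix_transpose, differentialMatrix]

lemma exact_transpose_differentialMatrix {p q r : ℤ} (h : p = q + 1) (h' : q = r + 1) :
    Function.Exact (differentialMatrix X h').transpose.mulVecLin
      (differentialMatrix X h).transpose.mulVecLin := by
  rw [← toMatrix_dualMap_differential, ← toMatrix_dualMap_differential]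
  exact exact_mulVecLin_toMatrix _ _ _ (exact_dualMap_differential X h h')

lemma differentialMatrix_mem {J : Ideal A}
    (hmin : ∀ n, LinearMap.range (X.d n) ≤ J • (⊤ : Submodule A (X.C n))) {p q : ℤ}
    (h : p = q + 1) (i : Fin (Module.finrank A (X.C q))) (k : Fin (Module.finrank A (X.C p))) :
    differentialMatrix X h i k ∈ J := by
  subst h
  rw [differentialMatrix, LinearMap.toMatrix_apply]
  exact (basis_mem_smul_top _).1 (hmin q ⟨_, rfl⟩) i

/-- The complex `C`, indexed so that its differentials raise degrees. -/
noncomputable def reversedMatrixComplex : MatrixComplex A where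
  rank n := Module.finrank A (X.C (-n))
  d n := differentialMatrix X (show -n = -(n + 1) + 1 by ring)
  exact _ := exact_differentialMatrix X _ _
  dualExact _ := exact_transpose_differentialMatrix X _ _

/-- The dual complex `C*`, whose differentials raise degrees. -/
noncomputable def dualMatrixComplex : MatrixComplex A where
  rank n := Module.finrank A (X.C n)
  d n := (differentialMatrix X (rfl : n + 1 = n + 1)).transpose
  exact _ := exact_transpose_differentialMatrix X _ _
  dualExact _ := exact_differentialMatrix X _ _

/-- The module `M = Im d₀` as the image of a differential of `reversedMatrixComplex`. -/
noncomputable def imageEquiv : LinearMap.range (X.d (-1)) ≃ₗ[A]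
    LinearMap.range ((reversedMatrixComplex X).d 0).mulVecLin :=
  rangeToMatrixEquiv (chosenBasis X (-1 + 1)) (chosenBasis X (-1)) (X.d (-1))

/-- The module `M*` as the image of a differential of `dualMatrixComplex`. -/
noncomputable def dualImageEquiv : Module.Dual A (LinearMap.range (X.d (-1))) ≃ₗ[A]
    LinearMap.range ((dualMatrixComplex X).d (-1)).mulVecLin :=
  dualRangeEquiv (X.exact (-1)) (X.dualExact (-1)) ≪≫ₗ
    rangeToMatrixEquiv (chosenBasis X (-1)).dualBasis (chosenBasis X (-1 + 1)).dualBasis _ ≪≫ₗ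
    LinearEquiv.ofEq _ _ (congrArg (fun D : Matrix _ _ A => LinearMap.range D.mulVecLin)
      (toMatrix_dualMap_differential X (rfl : -1 + 1 = -1 + 1)))

end TotallyAcyclicComplex

section RegularSequence

variable {B : Type u} [CommRing B]

lemma ofList_take_eq_initialIdeal {xs : List B} {j : ℕ} (hj : j ≤ xs.length) :
    Ideal.ofList (xs.take j) = initialIdeal (fun i => xs.getD i 0) j := by
  induction j with
  | zero => simp [initialIdeal_zero]
  | succ j ih =>
    rw [List.take_succ_eq_append_getElem hj, Ideal.ofList_append, Ideal.ofList_singleton,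
      initialIdeal_succ, ih (Nat.le_of_succ_le hj), List.getD_eq_getElem _ _ hj]

/-- A regular sequence, given as a list. -/
def LocalRegularSequence.ofList [IsLocalRing B] (xs : List B)
    (hxs : ∀ x ∈ xs, x ∈ maximalIdeal B) (hreg : RingTheory.Sequence.IsWeaklyRegular B xs) :
    LocalRegularSequence B where
  length := xs.length
  x i := xs.getD i 0
  mem_maximalIdeal i hi := by
    rw [List.getD_eq_getElem _ _ hi]
    exact hxs _ (List.getElem_mem hi)
  isRegularModulo i hi v hv := by
    have hreg := (hreg.regular_mod_prev i hi).right_eq_zero_of_smul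
      (x := Submodule.Quotient.mk v)
    rw [← Submodule.Quotient.mk_smul, Submodule.Quotient.mk_eq_zero,
      Submodule.Quotient.mk_eq_zero, ofList_take_eq_initialIdeal hi.le] at hreg
    exact hreg (by rwa [List.getD_eq_getElem _ _ hi] at hv)

lemma LocalRegularSequence.ideal_ofList [IsLocalRing B] {xs : List B}
    (hxs : ∀ x ∈ xs, x ∈ maximalIdeal B) (hreg : RingTheory.Sequence.IsWeaklyRegular B xs) :
    (LocalRegularSequence.ofList xs hxs hreg).ideal = Ideal.ofList xs :=
  (ofList_take_eq_initialIdeal le_rfl).symm.trans (by rw [List.take_length])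

end RegularSequence

lemma complexityMinus_rank_reversedMatrixComplex {A : Type u} [CommRing A] [Nontrivial A]
    (X : TotallyAcyclicComplex A) :
    complexityMinus (reversedMatrixComplex X).rank =
      complexityPlus fun n => Module.finrank A (X.C n) :=
  congrArg complexityPlus
    (funext fun n => congrArg (fun m => Module.finrank A (X.C m)) (neg_neg n))

theorem complexityPlus_eq_complexityMinus {A : Type u} [CommRing A] [IsLocalRing A]
    {X : TotallyAcyclicComplex A}
    (hmin : ∀ n, LinearMap.range (X.d n) ≤ maximalIdeal A • (⊤ : Submodule A (X.C n)))
    {A' B : Type u} [CommRing A'] [IsLocalRing A'] [Algebra A A'] [Module.Flat A A']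
    [IsLocalHom (algebraMap A A')] [CommRing B] [IsLocalRing B] [IsNoetherianRing B] {g : B →+* A'}
    (hg : Function.Surjective g) {R : LocalRegularSequence B} (hker : RingHom.ker g = R.ideal)
    {T : Type u} [AddCommGroup T] [Module A' T]
    (e : T ≃ₗ[A'] (A' ⊗[A] LinearMap.range (X.d (-1))) ×
      (A' ⊗[A] Module.Dual A (LinearMap.range (X.d (-1))))) {k : ℕ}
    (hT : letI : Module B T := Module.compHom T g
      ProjDimLT B T k) :
    complexityPlus (fun n => Module.finrank A (X.C n)) =
      complexityMinus (fun n => Module.finrank A (X.C n)) := by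
  let := g.toAlgebra
  let : Module B T := Module.compHom T g
  have : IsScalarTower B A' T := ⟨fun b => mul_smul (g b)⟩
  apply le_antisymm
  · rw [← complexityMinus_rank_reversedMatrixComplex]
    exact MatrixComplex.complexityMinus_rank_le_of_retract (X := reversedMatrixComplex X) A'
      (fun _ => differentialMatrix_mem X hmin _) hg hker (imageEquiv X)
      (i := e.symm.toLinearMap ∘ₗ LinearMap.inl A' _ _) (r := LinearMap.fst A' _ _ ∘ₗ e.toLinearMap)
      (LinearMap.ext fun v => by simp) hT
  · exact MatrixComplex.complexityMinus_rank_le_of_retract (X := dualMatrixComplex X) A'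
      (fun _ i k => differentialMatrix_mem X hmin _ k i) hg hker (dualImageEquiv X)
      (i := e.symm.toLinearMap ∘ₗ LinearMap.inr A' _ _) (r := LinearMap.snd A' _ _ ∘ₗ e.toLinearMap)
      (LinearMap.ext fun v => by simp) hT

end SymmetricGrowth

open SymmetricGrowth

theorem symmetric_growth_of_quasiDeformation
    (A : Type u) [CommRing A] [IsNoetherianRing A] [IsLocalRing A]
    (X : TotallyAcyclicComplex A)
    -- minimality of the complex C
    (hmin : ∀ n : ℤ, LinearMap.range (X.d n) ≤
      (maximalIdeal A) • (⊤ : Submodule A (X.C n)))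
    -- a quasi-deformation A → A' ← B
    (A' : Type u) [CommRing A'] [IsNoetherianRing A'] [IsLocalRing A']
    [Algebra A A'] [Module.Flat A A'] (hflatLocal : IsLocalHom (algebraMap A A'))
    (B : Type u) [CommRing B] [IsNoetherianRing B] [IsLocalRing B]
    (g : B →+* A') (hg : Function.Surjective g) (hgLocal : IsLocalHom g)
    (xs : List B) (hxs : ∀ x ∈ xs, x ∈ maximalIdeal B)
    (hreg : RingTheory.Sequence.IsRegular B xs)
    (hker : RingHom.ker g = Ideal.ofList xs)
    -- (M ⊗_A A') ⊕ (M* ⊗_A A'), regarded as a B-module via g : B → A',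
    -- has finite projective dimension over B, where M = Im(d₀)
    (hpd : letI M := ↥(LinearMap.range (X.d (-1)))
      letI T := (A' ⊗[A] M) × (A' ⊗[A] (Module.Dual A M))
      letI : Module B T := Module.compHom T g
      Nonempty (FiniteFreeResolution B T)) :
    -- conclusion: C has symmetric growth
    complexityPlus (fun n => Module.finrank A (X.C n)) =
      complexityMinus (fun n => Module.finrank A (X.C n)) := by
  have hker' := hker.trans (LocalRegularSequence.ideal_ofList hxs hreg.toIsWeaklyRegular).symm
  let M := LinearMap.range (X.d (-1))
  let T := (A' ⊗[A] M) × (A' ⊗[A] Module.Dual A M)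
  let : Module B T := Module.compHom T g
  obtain ⟨F⟩ : Nonempty (FiniteFreeResolution B T) := hpd
  exact complexityPlus_eq_complexityMinus hmin hg hker' (LinearEquiv.refl A' T)
    (projDimLT_of_finiteFreeResolution F)
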